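/- arXiv:2003.08735 — 3 statements merged into one kernel-verified Lean document; each statement's English description precedes it below -/
import Mathlib

section
/- Let n ≥ 1, let b ∈ X_n, let P be admissible for b, and set f = f_P on ℍ. Let 𝒜(b) = 2·∂_{b_1}(log Z)(b), the partial derivative of log Z in the first coordinate. Then f admits the expansion f(z) = i·(z − b_1)^{−1/2}·(1 + 2𝒜(b)·(z − b_1) + o(z − b_1)) as z → b_1 within ℍ; precisely, ((z − b_1)^{1/2}·f(z) − i − 4i·∂_{b_1}(log Z)(b)·(z − b_1)) / (z − b_1) tends to 0 as z → b_1 with z ∈ ℍ. -/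
open scoped BigOperators
open Finset

noncomputable section

/-- The chamber `X_n = {b : b₁ < b₂ < ⋯ < b₂ₙ}`. -/
def chamber (n : ℕ) : Set (Fin (2*n) → ℝ) := {b | StrictMono b}

/-- For `k : Fin n` (0-based), `idx n k false` is the index of `b_{2k-1}` (1-based),
and `idx n k true` is the index of `b_{2k}` (1-based). -/
def idx (n : ℕ) (k : Fin n) (s : Bool) : Fin (2*n) :=
  if s then ⟨2*k.val+1, by have := k.isLt; omega⟩ else ⟨2*k.val, by have := k.isLt; omega⟩

/-- The sign `σ_i ∈ {±1}` encoded by a boolean configuration. -/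
def sgn {n : ℕ} (σ : Fin n → Bool) (i : Fin n) : ℝ := if σ i then 1 else -1

/-- The cross-ratio `χ_{ij}(b)`. -/
def chi (n : ℕ) (b : Fin (2*n) → ℝ) (i j : Fin n) : ℝ :=
  ((b (idx n i true) - b (idx n j true)) * (b (idx n i false) - b (idx n j false))) /
  ((b (idx n i true) - b (idx n j false)) * (b (idx n i false) - b (idx n j true)))

/-- The multiple SLE_{16/3} partition function `Z`. -/
def Zfun (n : ℕ) (b : Fin (2*n) → ℝ) : ℝ :=
  (∏ k : Fin n, (b (idx n k true) - b (idx n k false)) ^ (-(1:ℝ)/8)) *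
  ((∑ σ : Fin n → Bool, ∏ p ∈ Finset.univ.filter (fun p : Fin n × Fin n => p.1 < p.2),
      chi n b p.1 p.2 ^ (sgn σ p.1 * sgn σ p.2 / 4)) ^ ((1:ℝ)/2))

/-- Partial derivative in the `i`-th coordinate. -/
def pderiv' {m : ℕ} (i : Fin m) (f : (Fin m → ℝ) → ℝ) (x : Fin m → ℝ) : ℝ :=
  fderiv ℝ f x (Pi.single i 1)


/-- The upper half-plane `ℍ`. -/
def UHP : Set ℂ := {z | 0 < z.im}

/-- `D(z) = ∏_{j=1}^{2n} (z − b_j)^{1/2}` with the principal branch of the square root. -/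
def Dfun (n : ℕ) (b : Fin (2*n) → ℝ) (z : ℂ) : ℂ :=
  ∏ j : Fin (2*n), (z - (b j : ℂ)) ^ ((1:ℂ)/2)

/-- `f_P(z) = P(z)/D(z)`. -/
def fP (n : ℕ) (b : Fin (2*n) → ℝ) (P : Polynomial ℂ) (z : ℂ) : ℂ :=
  Polynomial.eval z P / Dfun n b z

/-- `P` is admissible for `b`: `deg P ≤ n − 1`, the matching conditions (i) hold at the
pairs `(b_{2i−1}, b_{2i})`, `i = 2, …, n`, and the normalization (ii) holds at `b₁`. -/
def Admissible (n : ℕ) (hn : 0 < n) (b : Fin (2*n) → ℝ) (P : Polynomial ℂ) : Prop :=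
  P.natDegree ≤ n - 1 ∧
  (∀ k : Fin n, 1 ≤ k.val → ∃ L : ℂ,
      Filter.Tendsto
        (fun z : ℂ => fP n b P z * (z - (b (idx n k false) : ℂ)) ^ ((1:ℂ)/2)
          * (z - (b (idx n k true) : ℂ)) ^ ((1:ℂ)/2))
        (nhdsWithin (b (idx n k false) : ℂ) UHP) (nhds L) ∧
      Filter.Tendsto
        (fun z : ℂ => fP n b P z * (z - (b (idx n k false) : ℂ)) ^ ((1:ℂ)/2)
          * (z - (b (idx n k true) : ℂ)) ^ ((1:ℂ)/2))
        (nhdsWithin (b (idx n k true) : ℂ) UHP) (nhds (-L))) ∧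
  Filter.Tendsto
    (fun z : ℂ => (z - (b ⟨0, by omega⟩ : ℂ)) ^ ((1:ℂ)/2) * fP n b P z)
    (nhdsWithin (b ⟨0, by omega⟩ : ℂ) UHP) (nhds Complex.I)

end


/-- Sums over ordered pairs localise on pairs containing `i`. -/
lemma sum_pairs_eq {n : ℕ} (i : Fin n) (g : Fin n → Fin n → ℝ)
    (hs : ∀ a c, g a c = g c a) (h0 : ∀ a c, a ≠ i → c ≠ i → g a c = 0) :
    ∑ p ∈ Finset.univ.filter (fun p : Fin n × Fin n => p.1 < p.2), g p.1 p.2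
      = ∑ k ∈ Finset.univ.erase i, g i k := by
  symm
  refine Finset.sum_of_injOn (fun k => if i < k then (i, k) else (k, i)) ?_ ?_ ?_ ?_
  · intro a ha c hc h
    simp only [coe_erase, coe_univ, Set.mem_sdiff, Set.mem_univ, Set.mem_singleton_iff, true_and] at ha hc
    by_cases h1 : i < a <;> by_cases h2 : i < c <;> simp [h1, h2] at h <;> grind
  · intro a ha
    simp only [coe_erase, coe_univ, Set.mem_sdiff, Set.mem_univ, Set.mem_singleton_iff, true_and] at ha
    by_cases h1 : i < a
    · simp [h1]
    · simp [h1]; omega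
  · intro p hp hp'
    simp only [Finset.mem_filter, Finset.mem_univ, true_and] at hp
    apply h0
    · intro h
      apply hp'
      refine ⟨p.2, ?_, ?_⟩
      · simp; omega
      · rw [h] at hp; simp only [hp, if_true]; rw [← h]
    · intro h
      apply hp'
      refine ⟨p.1, ?_, ?_⟩
      · simp; omega
      · rw [h] at hp; simp only [not_lt.2 hp.le, if_false]; rw [← h]
  · intro a ha
    by_cases h1 : i < a
    · simp [h1]
    · simp [h1, hs i a]

lemma perk_aux (p q r s : ℝ) (hp : 0 < p) (hq : 0 < q) (hr : 0 < r) (hs : 0 < s) :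
    Real.exp (Real.log ((p * q) / (r * s)) / 2) * s * (√ r * √ p) = p * (√ q * √ s) := by
  rw [← Real.log_sqrt (by positivity), Real.exp_log (by positivity), Real.sqrt_div (by positivity),
    Real.sqrt_mul hp.le, Real.sqrt_mul hr.le]
  have := Real.mul_self_sqrt hp.le
  have := Real.mul_self_sqrt hs.le
  have := Real.sqrt_pos.2 hr
  have := Real.sqrt_pos.2 hs
  field_simp
  nlinarith

/-- Local algebraic identity, same spins. -/
lemma perk_same (x y u v : ℝ)
    (h : (0 < x - u ∧ 0 < y - u ∧ 0 < x - v ∧ 0 < y - v) ∨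
      (x - u < 0 ∧ y - u < 0 ∧ x - v < 0 ∧ y - v < 0)) :
    Real.exp (Real.log (((y - v) * (x - u)) / ((y - u) * (x - v))) / 2) * (x - v) *
      (√ |y - u| * √ |y - v|) = (y - v) * (√ |x - u| * √ |x - v|) := by
  rcases h with ⟨h1, h2, h3, h4⟩ | ⟨h1, h2, h3, h4⟩
  · rw [abs_of_pos h1, abs_of_pos h2, abs_of_pos h3, abs_of_pos h4]
    exact perk_aux _ _ _ _ h4 h1 h2 h3
  · rw [abs_of_neg h1, abs_of_neg h2, abs_of_neg h3, abs_of_neg h4]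
    have := perk_aux (-(y-v)) (-(x-u)) (-(y-u)) (-(x-v)) (by linarith) (by linarith)
      (by linarith) (by linarith)
    simp only [neg_mul_neg] at this
    linarith

/-- Local algebraic identity, opposite spins. -/
lemma perk_diff (x y u v : ℝ)
    (h : (0 < x - u ∧ 0 < y - u ∧ 0 < x - v ∧ 0 < y - v) ∨
      (x - u < 0 ∧ y - u < 0 ∧ x - v < 0 ∧ y - v < 0)) :
    Real.exp (-Real.log (((y - v) * (x - u)) / ((y - u) * (x - v))) / 2) * (x - u) *
      (√ |y - u| * √ |y - v|) = (y - u) * (√ |x - u| * √ |x - v|) := by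
  have := perk_same x y v u (by tauto)
  rw [← Real.log_inv, inv_div]
  linarith

/-- Uniqueness: a real polynomial of degree at most `n-1` vanishing at `x₀` and changing sign
on the other `n-1` intervals vanishes. -/
lemma real_unique {n : ℕ} (i0 : Fin n) (x y : Fin n → ℝ) (hxy : ∀ k, x k < y k)
    (hyx : ∀ j k, j < k → y j < x k) (R : Polynomial ℝ) (hd : R.natDegree ≤ n - 1)
    (h0 : R.eval (x i0) = 0)
    (h : ∀ i, i ≠ i0 → ∃ A B : ℝ, 0 < A ∧ 0 < B ∧ R.eval (x i) * A = - (R.eval (y i) * B)) :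
    R = 0 := by
  have hroot : ∀ i, ∃ t ∈ Set.Icc (x i) (y i), R.eval t = 0 := by
    intro i
    by_cases hi : i = i0
    · subst hi; exact ⟨x i, ⟨le_rfl, (hxy i).le⟩, h0⟩
    obtain ⟨A, B, hA, hB, hAB⟩ := h i hi
    have hc : ContinuousOn (fun t => R.eval t) (Set.Icc (x i) (y i)) := R.continuous.continuousOn
    rcases le_total (R.eval (x i)) 0 with h1 | h1
    · have h2 : 0 ≤ R.eval (y i) := by
        by_contra h2; push Not at h2; nlinarith
      obtain ⟨t, ht, ht'⟩ := intermediate_value_Icc (hxy i).le hc ⟨h1, h2⟩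
      exact ⟨t, ht, ht'⟩
    · have h2 : R.eval (y i) ≤ 0 := by
        by_contra h2; push Not at h2; nlinarith
      obtain ⟨t, ht, ht'⟩ := intermediate_value_Icc' (hxy i).le hc ⟨h2, h1⟩
      exact ⟨t, ht, ht'⟩
  choose t ht ht0 using hroot
  have hinj : Function.Injective t := by
    intro j k hjk
    rcases lt_trichotomy j k with hl | hl | hl
    · have := hyx _ _ hl; have := (ht j).2; have := (ht k).1; linarith
    · exact hl
    · have := hyx _ _ hl; have := (ht k).2; have := (ht j).1; linarith
  apply Polynomial.eq_zero_of_natDegree_lt_card_of_eval_eq_zero R hinj ht0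
  have := i0.isLt
  simp; omega

lemma complex_unique {n : ℕ} (i0 : Fin n) (x y : Fin n → ℝ) (hxy : ∀ k, x k < y k)
    (hyx : ∀ j k, j < k → y j < x k) (R : Polynomial ℂ) (hd : R.natDegree ≤ n - 1)
    (h0 : R.eval (x i0 : ℂ) = 0)
    (h : ∀ i, i ≠ i0 → ∃ A B : ℝ, 0 < A ∧ 0 < B ∧
      R.eval (x i : ℂ) * A = - (R.eval (y i : ℂ) * B)) :
    R = 0 := by
  have hn : 0 < n := lt_of_le_of_lt (Nat.zero_le _) i0.isLt
  have key : ∀ φ : ℂ →ₗ[ℝ] ℝ, ∀ k, k < n → φ (R.coeff k) = 0 := by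
    intro φ k hk
    let T : Polynomial ℝ := ∑ i ∈ range n, Polynomial.monomial i (φ (R.coeff i))
    have hT : ∀ t : ℝ, T.eval t = φ (R.eval (t : ℂ)) := by
      intro t
      rw [Polynomial.eval_eq_sum_range' (p := R) (n := n) (by omega), map_sum,
        Polynomial.eval_finsetSum]
      apply Finset.sum_congr rfl
      intro i _
      rw [Polynomial.eval_monomial, ← Complex.ofReal_pow, mul_comm (R.coeff i),
        ← Complex.real_smul, map_smul, smul_eq_mul, mul_comm]
    have hT0 : T = 0 := by
      apply real_unique i0 x y hxy hyx T
      · apply Polynomial.natDegree_sum_le_of_forall_le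
        intro i hi
        refine (Polynomial.natDegree_monomial_le _).trans ?_
        have := Finset.mem_range.1 hi
        omega
      · rw [hT, h0, map_zero]
      · intro i hi
        obtain ⟨A, B, hA, hB, hAB⟩ := h i hi
        refine ⟨A, B, hA, hB, ?_⟩
        have := congrArg φ hAB
        rw [mul_comm, ← Complex.real_smul, map_neg, mul_comm (R.eval (y i : ℂ)),
          ← Complex.real_smul, map_smul, map_smul] at this
        rw [hT, hT]
        simp only [smul_eq_mul] at this
        linarith
    have := congrArg (fun p => p.coeff k) hT0
    simpa [T, Polynomial.finsetSum_coeff, Polynomial.coeff_monomial, hk] using this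
  ext k
  rw [Polynomial.coeff_zero]
  by_cases hk : k < n
  · apply Complex.ext
    · exact key Complex.reLm k hk
    · exact key Complex.imLm k hk
  · exact Polynomial.coeff_eq_zero_of_natDegree_lt (by omega)

/-- Abstract cross-ratio. -/
noncomputable def chiA {n : ℕ} (x y : Fin n → ℝ) (i j : Fin n) : ℝ :=
  ((y i - y j) * (x i - x j)) / ((y i - x j) * (x i - y j))

/-- Weight of a spin configuration. -/
noncomputable def WA {n : ℕ} (x y : Fin n → ℝ) (σ : Fin n → Bool) : ℝ :=
  Real.exp (∑ p ∈ Finset.univ.filter (fun p : Fin n × Fin n => p.1 < p.2),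
    sgn σ p.1 * sgn σ p.2 / 4 * Real.log (chiA x y p.1 p.2))

/-- Chosen point in each pair. -/
noncomputable def aA {n : ℕ} (x y : Fin n → ℝ) (i0 : Fin n) (σ : Fin n → Bool) (k : Fin n) : ℝ :=
  if σ k = σ i0 then x k else y k

/-- Explicit solution. -/
noncomputable def QA {n : ℕ} (x y : Fin n → ℝ) (i0 : Fin n) : Polynomial ℝ :=
  ∑ σ : Fin n → Bool, Polynomial.C (WA x y σ) * ∏ j ∈ Finset.univ.erase i0,
    (Polynomial.C ((x i0 - aA x y i0 σ j)⁻¹) * (Polynomial.X - Polynomial.C (aA x y i0 σ j)))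

lemma QA_eval {n : ℕ} (x y : Fin n → ℝ) (i0 : Fin n) (t : ℝ) :
    (QA x y i0).eval t = ∑ σ : Fin n → Bool, WA x y σ * ∏ j ∈ Finset.univ.erase i0,
      ((x i0 - aA x y i0 σ j)⁻¹ * (t - aA x y i0 σ j)) := by
  simp [QA, Polynomial.eval_finsetSum, Polynomial.eval_prod]

lemma QA_natDegree {n : ℕ} (x y : Fin n → ℝ) (i0 : Fin n) : (QA x y i0).natDegree ≤ n - 1 := by
  apply Polynomial.natDegree_sum_le_of_forall_le
  intro σ _
  refine (Polynomial.natDegree_C_mul_le _ _).trans ?_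
  refine (Polynomial.natDegree_prod_le _ _).trans ?_
  refine (Finset.sum_le_card_nsmul _ _ 1 ?_).trans ?_
  · intro j _
    refine (Polynomial.natDegree_C_mul_le _ _).trans ?_
    exact Polynomial.natDegree_X_sub_C_le _
  · simp

/-- Spin flip. -/
def flipA {n : ℕ} (i : Fin n) (σ : Fin n → Bool) : Fin n → Bool := Function.update σ i (!σ i)

lemma flipA_flipA {n : ℕ} (i : Fin n) (σ : Fin n → Bool) : flipA i (flipA i σ) = σ := by
  simp [flipA]

lemma flipA_self {n : ℕ} (i : Fin n) (σ : Fin n → Bool) : flipA i σ i = !σ i := by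
  simp [flipA]

lemma flipA_ne {n : ℕ} (i k : Fin n) (h : k ≠ i) (σ : Fin n → Bool) : flipA i σ k = σ k := by
  simp [flipA, h]

lemma chiA_symm {n : ℕ} (x y : Fin n → ℝ) (i j : Fin n) : chiA x y i j = chiA x y j i := by
  unfold chiA
  congr 1 <;> ring

lemma WA_flip {n : ℕ} (x y : Fin n → ℝ) (i : Fin n) (σ : Fin n → Bool) :
    WA x y σ = WA x y (flipA i σ) *
      ∏ k ∈ Finset.univ.erase i, Real.exp (sgn σ i * sgn σ k / 2 * Real.log (chiA x y i k)) := by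
  have hi : sgn (flipA i σ) i = - sgn σ i := by
    unfold sgn; rw [flipA_self]; cases σ i <;> simp
  have hk : ∀ k, k ≠ i → sgn (flipA i σ) k = sgn σ k := by
    intro k hk; unfold sgn; rw [flipA_ne _ _ hk]
  unfold WA
  rw [← Real.exp_sum, ← Real.exp_add]
  congr 1
  rw [← sub_eq_iff_eq_add', ← Finset.sum_sub_distrib]
  rw [sum_pairs_eq i (fun a c => sgn σ a * sgn σ c / 4 * Real.log (chiA x y a c) -
    sgn (flipA i σ) a * sgn (flipA i σ) c / 4 * Real.log (chiA x y a c))]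
  · apply Finset.sum_congr rfl
    intro k hk'
    rw [hi, hk k (Finset.ne_of_mem_erase hk')]
    ring
  · intro a c; rw [chiA_symm x y c a]; ring
  · intro a c ha hc
    rw [hk a ha, hk c hc]; ring

lemma pos_cases {n : ℕ} (x y : Fin n → ℝ) (hxy : ∀ k, x k < y k)
    (hyx : ∀ j k, j < k → y j < x k) (i k : Fin n) (h : k ≠ i) :
    (0 < x i - x k ∧ 0 < y i - x k ∧ 0 < x i - y k ∧ 0 < y i - y k) ∨
      (x i - x k < 0 ∧ y i - x k < 0 ∧ x i - y k < 0 ∧ y i - y k < 0) := by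
  have h1 := hxy i
  have h2 := hxy k
  rcases lt_or_gt_of_ne h with h | h
  · left; have := hyx _ _ h; refine ⟨?_, ?_, ?_, ?_⟩ <;> linarith
  · right; have := hyx _ _ h; refine ⟨?_, ?_, ?_, ?_⟩ <;> linarith

lemma term_match {n : ℕ} (x y : Fin n → ℝ) (hxy : ∀ k, x k < y k)
    (hyx : ∀ j k, j < k → y j < x k) (i0 i : Fin n) (hi : i ≠ i0) (σ : Fin n → Bool) :
    (WA x y σ * ∏ j ∈ Finset.univ.erase i0,
        ((x i0 - aA x y i0 σ j)⁻¹ * (x i - aA x y i0 σ j))) *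
      ∏ k ∈ Finset.univ.erase i, (√ |y i - x k| * √ |y i - y k|) =
    -((WA x y (flipA i σ) * ∏ j ∈ Finset.univ.erase i0,
        ((x i0 - aA x y i0 (flipA i σ) j)⁻¹ * (y i - aA x y i0 (flipA i σ) j))) *
      ∏ k ∈ Finset.univ.erase i, (√ |x i - x k| * √ |x i - y k|)) := by
  have hmem : i ∈ Finset.univ.erase i0 := by simp [hi]
  have hmem0 : i0 ∈ Finset.univ.erase i := by simp [hi.symm]
  rw [WA_flip x y i σ]
  rw [← Finset.mul_prod_erase _ _ hmem, ← Finset.mul_prod_erase _ _ hmem,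
    ← Finset.mul_prod_erase _ _ hmem0, ← Finset.mul_prod_erase _ _ hmem0,
    ← Finset.mul_prod_erase _ _ hmem0, Finset.erase_right_comm (a := i)]
  by_cases hs : σ i = σ i0
  · have e1 : aA x y i0 σ i = x i := by simp [aA, hs]
    have e2 : aA x y i0 (flipA i σ) i = y i := by
      unfold aA; rw [flipA_self, flipA_ne _ _ hi.symm, hs]; simp
    rw [e1, e2]; simp
  have e1 : aA x y i0 σ i = y i := by simp [aA, hs]
  have e2 : aA x y i0 (flipA i σ) i = x i := by
    unfold aA; rw [flipA_self, flipA_ne _ _ hi.symm]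
    rw [if_pos]; revert hs; cases σ i <;> cases σ i0 <;> simp
  rw [e1, e2]
  have hE : ∏ k ∈ (Finset.univ.erase i0).erase i,
      (Real.exp (sgn σ i * sgn σ k / 2 * Real.log (chiA x y i k)) *
        ((x i0 - aA x y i0 σ k)⁻¹ * (x i - aA x y i0 σ k)) * (√ |y i - x k| * √ |y i - y k|)) =
      ∏ k ∈ (Finset.univ.erase i0).erase i,
        (((x i0 - aA x y i0 (flipA i σ) k)⁻¹ * (y i - aA x y i0 (flipA i σ) k)) *
          (√ |x i - x k| * √ |x i - y k|)) := by
    apply Finset.prod_congr rfl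
    intro k hk
    have hki := Finset.ne_of_mem_erase hk
    have e3 : aA x y i0 (flipA i σ) k = aA x y i0 σ k := by
      unfold aA; rw [flipA_ne _ _ hki, flipA_ne _ _ hi.symm]
    rw [e3]
    have hp := pos_cases x y hxy hyx i k hki
    by_cases hk0 : σ k = σ i0
    · have e4 : aA x y i0 σ k = x k := by simp [aA, hk0]
      have e5 : sgn σ i * sgn σ k / 2 * Real.log (chiA x y i k) =
          -Real.log (chiA x y i k) / 2 := by
        unfold sgn; rw [hk0]; revert hs; cases σ i <;> cases σ i0 <;> simp <;> ring
      rw [e4, e5]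
      have := perk_diff (x i) (y i) (x k) (y k) hp
      unfold chiA
      linear_combination (x i0 - x k)⁻¹ * this
    · have e4 : aA x y i0 σ k = y k := by simp [aA, hk0]
      have e5 : sgn σ i * sgn σ k / 2 * Real.log (chiA x y i k) =
          Real.log (chiA x y i k) / 2 := by
        unfold sgn; revert hs hk0; cases σ i <;> cases σ i0 <;> cases σ k <;> simp <;> ring
      rw [e4, e5]
      have := perk_same (x i) (y i) (x k) (y k) hp
      unfold chiA
      linear_combination (x i0 - y k)⁻¹ * this
  have h0 : Real.exp (sgn σ i * sgn σ i0 / 2 * Real.log (chiA x y i i0)) *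
        ((x i0 - y i)⁻¹ * (x i - y i)) * (√ |y i - x i0| * √ |y i - y i0|) =
      -(((x i0 - x i)⁻¹ * (y i - x i)) * (√ |x i - x i0| * √ |x i - y i0|)) := by
    have hp := pos_cases x y hxy hyx i i0 hi.symm
    have e5 : sgn σ i * sgn σ i0 / 2 * Real.log (chiA x y i i0) =
          -Real.log (chiA x y i i0) / 2 := by
      unfold sgn; revert hs; cases σ i <;> cases σ i0 <;> simp <;> ring
    rw [e5]
    have := perk_diff (x i) (y i) (x i0) (y i0) hp
    have n1 : x i0 - y i ≠ 0 := by rcases hp with hp | hp <;> intro h <;> linarith [hp.2.1]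
    have n2 : x i0 - x i ≠ 0 := by rcases hp with hp | hp <;> intro h <;> linarith [hp.1]
    unfold chiA
    generalize Real.exp (-Real.log (((y i - y i0) * (x i - x i0)) / ((y i - x i0) * (x i - y i0))) / 2) = e at *
    field_simp
    linear_combination (- (x i - y i)) * this
  simp only [Finset.prod_mul_distrib] at hE ⊢
  have hm := congrArg₂ (fun p q : ℝ => p * q) h0 hE
  beta_reduce at hm
  linear_combination WA x y (flipA i σ) * hm

lemma QA_match {n : ℕ} (x y : Fin n → ℝ) (hxy : ∀ k, x k < y k)
    (hyx : ∀ j k, j < k → y j < x k) (i0 i : Fin n) (hi : i ≠ i0) :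
    (QA x y i0).eval (x i) * ∏ k ∈ Finset.univ.erase i, (√ |y i - x k| * √ |y i - y k|) =
    -((QA x y i0).eval (y i) * ∏ k ∈ Finset.univ.erase i, (√ |x i - x k| * √ |x i - y k|)) := by
  rw [QA_eval, QA_eval, Finset.sum_mul, Finset.sum_mul, ← Finset.sum_neg_distrib]
  apply Finset.sum_equiv (Function.Involutive.toPerm (flipA i) (flipA_flipA i))
  · simp
  · intro σ _
    exact term_match x y hxy hyx i0 i hi σ

lemma aA_ne {n : ℕ} (x y : Fin n → ℝ) (hxy : ∀ k, x k < y k)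
    (hyx : ∀ j k, j < k → y j < x k) (i0 j : Fin n) (hj : j ≠ i0) (σ : Fin n → Bool) :
    x i0 - aA x y i0 σ j ≠ 0 := by
  have hp := pos_cases x y hxy hyx i0 j hj
  unfold aA
  split_ifs <;> intro h <;> rcases hp with hp | hp <;> linarith [hp.1, hp.2.2.1]

lemma QA_eval_base {n : ℕ} (x y : Fin n → ℝ) (hxy : ∀ k, x k < y k)
    (hyx : ∀ j k, j < k → y j < x k) (i0 : Fin n) :
    (QA x y i0).eval (x i0) = ∑ σ, WA x y σ := by
  rw [QA_eval]
  apply Finset.sum_congr rfl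
  intro σ _
  rw [Finset.prod_eq_one, mul_one]
  intro j hj
  exact inv_mul_cancel₀ (aA_ne x y hxy hyx i0 j (Finset.ne_of_mem_erase hj) σ)

lemma QA_deriv_base {n : ℕ} (x y : Fin n → ℝ) (hxy : ∀ k, x k < y k)
    (hyx : ∀ j k, j < k → y j < x k) (i0 : Fin n) :
    (QA x y i0).derivative.eval (x i0) =
      ∑ σ, WA x y σ * ∑ j ∈ Finset.univ.erase i0, (x i0 - aA x y i0 σ j)⁻¹ := by
  simp only [QA, Polynomial.derivative_sum, Polynomial.eval_finsetSum]
  apply Finset.sum_congr rfl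
  intro σ _
  rw [Polynomial.derivative_C_mul, Polynomial.eval_C_mul, Polynomial.derivative_prod_finset,
    Polynomial.eval_finsetSum]
  congr 1
  apply Finset.sum_congr rfl
  intro j hj
  rw [Polynomial.eval_mul, Polynomial.eval_prod, Finset.prod_eq_one, one_mul]
  · simp
  · intro k hk
    have := aA_ne x y hxy hyx i0 k (Finset.ne_of_mem_erase (Finset.mem_of_mem_erase hk)) σ
    simp [this]

lemma idx_bij (n : ℕ) : Function.Bijective (fun p : Fin n × Bool => idx n p.1 p.2) := by
  constructor
  · rintro ⟨k, s⟩ ⟨l, t⟩ h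
    have h' := congrArg Fin.val h
    cases s <;> cases t <;> simp [idx] at h' ⊢ <;> omega
  · intro j
    refine ⟨(⟨j.val / 2, by omega⟩, decide (j.val % 2 = 1)), ?_⟩
    apply Fin.ext
    by_cases h : j.val % 2 = 1
    · simp [idx, h]; omega
    · simp [idx, h]; omega

lemma idx_inj {n : ℕ} {k l : Fin n} {s t : Bool} : idx n k s = idx n l t ↔ k = l ∧ s = t := by
  constructor
  · intro h
    have := (idx_bij n).1 (a₁ := (k, s)) (a₂ := (l, t)) h
    simpa using this
  · rintro ⟨rfl, rfl⟩; rfl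

/-- All indices outside the `i`-th pair. -/
def Eset (n : ℕ) (i : Fin n) : Finset (Fin (2*n)) :=
  (Finset.univ.erase (idx n i true)).erase (idx n i false)

lemma prod_Eset {M : Type*} [CommMonoid M] (n : ℕ) (i : Fin n) (F : Fin (2*n) → M) :
    ∏ j ∈ Eset n i, F j = ∏ k ∈ Finset.univ.erase i, (F (idx n k false) * F (idx n k true)) := by
  have h1 : ∏ j ∈ Eset n i, F j = ∏ j, if j ∈ Eset n i then F j else 1 := by
    simp
  rw [h1, ← (Equiv.ofBijective _ (idx_bij n)).prod_comp, Fintype.prod_prod_type]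
  rw [← Finset.prod_erase (s := Finset.univ) (a := i)]
  · apply Finset.prod_congr rfl
    intro k hk
    have := Finset.ne_of_mem_erase hk
    simp [Eset, idx_inj, this, mul_comm]
  · simp [Eset, idx_inj]

lemma sum_Eset {M : Type*} [AddCommMonoid M] (n : ℕ) (i : Fin n) (F : Fin (2*n) → M) :
    ∑ j ∈ Eset n i, F j = ∑ k ∈ Finset.univ.erase i, (F (idx n k false) + F (idx n k true)) :=
  prod_Eset (M := Multiplicative M) n i F

/-- A branch of the square root that is analytic near the real point `x ≠ c`. -/
noncomputable def sqB (c x : ℝ) (z : ℂ) : ℂ :=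
  if c < x then (z - c) ^ ((1:ℂ)/2) else Complex.I * ((c - z) ^ ((1:ℂ)/2))

lemma sqB_eq (c x : ℝ) (z : ℂ) (hz : z ∈ UHP) : (z - c) ^ ((1:ℂ)/2) = sqB c x z := by
  unfold sqB
  split_ifs
  · rfl
  have him : 0 < (z - c).im := by simpa [UHP] using hz
  have h0 : z - c ≠ 0 := by intro h; rw [h] at him; simp at him
  have h1 : (c : ℂ) - z ≠ 0 := by intro h; apply h0; rw [← neg_sub, h, neg_zero]
  rw [Complex.cpow_def_of_ne_zero h0, Complex.cpow_def_of_ne_zero h1]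
  have hl : Complex.log (c - z) = Complex.log (z - c) - Real.pi * Complex.I := by
    rw [← neg_sub z (c : ℂ), Complex.log, Complex.log, norm_neg,
      Complex.arg_neg_eq_arg_sub_pi_of_im_pos him]
    push_cast; ring
  have hI : Complex.I = Complex.exp (Real.pi * Complex.I / 2) := by
    rw [mul_div_right_comm, Complex.exp_pi_div_two_mul_I]
  rw [hl]
  nth_rw 1 [hI]
  rw [← Complex.exp_add]
  congr 1
  ring

lemma sqrt_cpow (t : ℝ) (ht : 0 < t) : (t : ℂ) ^ ((1:ℂ)/2) = (√ t : ℝ) := by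
  rw [Real.sqrt_eq_rpow, Complex.ofReal_cpow ht.le]
  norm_num

lemma sqB_val (c x : ℝ) (h : c ≠ x) :
    sqB c x x = (if c < x then 1 else Complex.I) * (√ |x - c| : ℝ) := by
  unfold sqB
  split_ifs with h1
  · rw [← Complex.ofReal_sub, sqrt_cpow _ (by linarith), abs_of_pos (by linarith), one_mul]
  · have : x < c := lt_of_le_of_ne (not_lt.1 h1) h.symm
    rw [← Complex.ofReal_sub, sqrt_cpow _ (by linarith), abs_of_neg (by linarith), neg_sub]

lemma sqB_ne (c x : ℝ) (h : c ≠ x) : sqB c x x ≠ 0 := by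
  rw [sqB_val c x h]
  have : √ |x - c| ≠ 0 := (Real.sqrt_pos.2 (abs_pos.2 (sub_ne_zero.2 h.symm))).ne'
  split_ifs <;> simpa using this

lemma sqB_hasDerivAt (c x : ℝ) (h : c ≠ x) :
    HasDerivAt (sqB c x) (sqB c x x * (1 / (2 * (x - c)))) (x : ℂ) := by
  have hne : (x : ℂ) - c ≠ 0 := by
    rw [← Complex.ofReal_sub]; exact_mod_cast sub_ne_zero.2 h.symm
  have hne' : (c : ℂ) - x ≠ 0 := by
    rw [← Complex.ofReal_sub]; exact_mod_cast sub_ne_zero.2 h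
  unfold sqB
  split_ifs with h1
  · have := ((hasDerivAt_id (x : ℂ)).sub_const (c : ℂ)).cpow_const (c := (1:ℂ)/2) (by
      left; simp; linarith)
    refine this.congr_deriv ?_
    simp only [id_eq]
    rw [Complex.cpow_sub _ _ hne, Complex.cpow_one]
    field_simp
  · have hlt : x < c := lt_of_le_of_ne (not_lt.1 h1) h.symm
    have := (((hasDerivAt_id (x : ℂ)).const_sub (c : ℂ)).cpow_const (c := (1:ℂ)/2) (by
      left; simp; linarith)).const_mul Complex.I
    refine this.congr_deriv ?_
    simp only [id_eq]
    rw [Complex.cpow_sub _ _ hne', Complex.cpow_one]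
    rw [← neg_sub (c : ℂ) x]
    field_simp

lemma prod_sqB_hasDerivAt {ι : Type*} [DecidableEq ι] (E : Finset ι) (c : ι → ℝ) (x : ℝ)
    (h : ∀ j ∈ E, c j ≠ x) :
    HasDerivAt (fun z => ∏ j ∈ E, sqB (c j) x z)
      ((∏ j ∈ E, sqB (c j) x x) * ∑ j ∈ E, 1 / (2 * ((x : ℂ) - c j))) (x : ℂ) := by
  have := HasDerivAt.fun_finsetProd (u := E) (f := fun j => sqB (c j) x)
    (f' := fun j => sqB (c j) x x * (1 / (2 * ((x : ℂ) - c j)))) (x := (x : ℂ))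
    (fun j hj => sqB_hasDerivAt (c j) x (h j hj))
  refine this.congr_deriv ?_
  rw [Finset.mul_sum]
  apply Finset.sum_congr rfl
  intro j hj
  rw [← Finset.prod_erase_mul _ _ hj, smul_eq_mul]
  ring

lemma UHP_neBot (x : ℝ) : (nhdsWithin (x : ℂ) UHP).NeBot := by
  rw [← mem_closure_iff_nhdsWithin_neBot]
  have : UHP = {z : ℂ | 0 < z.im} := rfl
  rw [this, Complex.closure_setOfPred_lt_im]
  simp

lemma Dfun_eq (n : ℕ) (b : Fin (2*n) → ℝ) (x : ℝ) (z : ℂ) (hz : z ∈ UHP) :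
    Dfun n b z = ∏ j, sqB (b j) x z := by
  unfold Dfun
  exact Finset.prod_congr rfl (fun j _ => sqB_eq _ _ _ hz)

lemma cpow_ne_UHP (c : ℝ) (z : ℂ) (hz : z ∈ UHP) : (z - c) ^ ((1:ℂ)/2) ≠ 0 := by
  have him : 0 < (z - c).im := by simpa [UHP] using hz
  have h0 : z - c ≠ 0 := by intro h; rw [h] at him; simp at him
  rw [Complex.cpow_def_of_ne_zero h0]
  exact Complex.exp_ne_zero _

/-- Limit identification in condition (i). -/
lemma match_limit (n : ℕ) (b : Fin (2*n) → ℝ) (hb : StrictMono b) (P : Polynomial ℂ) (i : Fin n)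
    (s : Bool) (L : ℂ)
    (h : Filter.Tendsto
        (fun z : ℂ => fP n b P z * (z - (b (idx n i false) : ℂ)) ^ ((1:ℂ)/2)
          * (z - (b (idx n i true) : ℂ)) ^ ((1:ℂ)/2))
        (nhdsWithin (b (idx n i s) : ℂ) UHP) (nhds L)) :
    P.eval (b (idx n i s) : ℂ) = L * ∏ j ∈ Eset n i, sqB (b j) (b (idx n i s)) (b (idx n i s)) := by
  set p := b (idx n i s) with hp
  have hne : ∀ j ∈ Eset n i, b j ≠ p := by
    intro j hj h
    have := hb.injective h
    rw [this] at hj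
    cases s <;> simp [Eset] at hj
  have hG := (prod_sqB_hasDerivAt (Eset n i) b p hne).continuousAt.tendsto
  have hG' := h.mul (hG.mono_left nhdsWithin_le_nhds)
  have := UHP_neBot p
  refine tendsto_nhds_unique ?_ hG'
  have hc : Filter.Tendsto (fun z => P.eval z) (nhdsWithin (p : ℂ) UHP) (nhds (P.eval (p : ℂ))) :=
    (P.continuous.tendsto _).mono_left nhdsWithin_le_nhds
  refine hc.congr' ?_
  filter_upwards [self_mem_nhdsWithin] with z hz
  have e1 := cpow_ne_UHP (b (idx n i false)) z hz
  have e2 := cpow_ne_UHP (b (idx n i true)) z hz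
  have e3 : ∏ j ∈ Eset n i, sqB (b j) p z = ∏ j ∈ Eset n i, (z - (b j : ℂ)) ^ ((1:ℂ)/2) :=
    Finset.prod_congr rfl (fun j _ => (sqB_eq _ _ _ hz).symm)
  have e4 : ∏ j ∈ Eset n i, (z - (b j : ℂ)) ^ ((1:ℂ)/2) ≠ 0 :=
    Finset.prod_ne_zero_iff.2 (fun j _ => cpow_ne_UHP _ _ hz)
  have e5 : Dfun n b z = (z - (b (idx n i true) : ℂ)) ^ ((1:ℂ)/2) *
      ((z - (b (idx n i false) : ℂ)) ^ ((1:ℂ)/2) *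
        ∏ j ∈ Eset n i, (z - (b j : ℂ)) ^ ((1:ℂ)/2)) := by
    unfold Dfun Eset
    rw [Finset.mul_prod_erase _ (fun j => (z - (b j : ℂ)) ^ ((1:ℂ)/2)),
      Finset.mul_prod_erase _ (fun j => (z - (b j : ℂ)) ^ ((1:ℂ)/2))]
    · simp
    · simp [idx_inj]
  rw [e3, fP, e5]
  field_simp

lemma P_match (n : ℕ) (b : Fin (2*n) → ℝ) (hb : StrictMono b) (P : Polynomial ℂ) (i : Fin n)
    (L : ℂ)
    (h1 : Filter.Tendsto
        (fun z : ℂ => fP n b P z * (z - (b (idx n i false) : ℂ)) ^ ((1:ℂ)/2)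
          * (z - (b (idx n i true) : ℂ)) ^ ((1:ℂ)/2))
        (nhdsWithin (b (idx n i false) : ℂ) UHP) (nhds L))
    (h2 : Filter.Tendsto
        (fun z : ℂ => fP n b P z * (z - (b (idx n i false) : ℂ)) ^ ((1:ℂ)/2)
          * (z - (b (idx n i true) : ℂ)) ^ ((1:ℂ)/2))
        (nhdsWithin (b (idx n i true) : ℂ) UHP) (nhds (-L))) :
    P.eval (b (idx n i false) : ℂ) * (∏ j ∈ Eset n i, √ |b (idx n i true) - b j| : ℝ) =
     -(P.eval (b (idx n i true) : ℂ) * (∏ j ∈ Eset n i, √ |b (idx n i false) - b j| : ℝ)) := by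
  have e1 := match_limit n b hb P i false L h1
  have e2 := match_limit n b hb P i true (-L) h2
  have hv : ∀ s, ∏ j ∈ Eset n i, sqB (b j) (b (idx n i s)) (b (idx n i s)) =
      (∏ j ∈ Eset n i, if j < idx n i false then 1 else Complex.I) *
        (∏ j ∈ Eset n i, √ |b (idx n i s) - b j| : ℝ) := by
    intro s
    rw [Complex.ofReal_prod, ← Finset.prod_mul_distrib]
    apply Finset.prod_congr rfl
    intro j hj
    rw [sqB_val]
    · congr 1
      apply if_congr _ rfl rfl
      rw [hb.lt_iff_lt]
      simp [Eset] at hj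
      cases s
      · rfl
      · simp [idx, Fin.ext_iff, Fin.lt_def] at hj ⊢
        omega
    · intro h
      have := hb.injective h
      rw [this] at hj
      cases s <;> simp [Eset] at hj
  rw [hv] at e1 e2
  rw [e1, e2]
  ring

lemma hasFDerivAt_logdiff {m : ℕ} (b : Fin m → ℝ) (a c : Fin m) (h : b a ≠ b c) :
    HasFDerivAt (fun u : Fin m → ℝ => Real.log (u a - u c))
      ((b a - b c)⁻¹ • (ContinuousLinearMap.proj (R := ℝ) (φ := fun _ : Fin m => ℝ) a -
        ContinuousLinearMap.proj (R := ℝ) (φ := fun _ : Fin m => ℝ) c)) b := by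
  have h1 : HasFDerivAt (fun u : Fin m → ℝ => u a - u c)
      (ContinuousLinearMap.proj (R := ℝ) (φ := fun _ : Fin m => ℝ) a -
        ContinuousLinearMap.proj (R := ℝ) (φ := fun _ : Fin m => ℝ) c) b :=
    (hasFDerivAt_apply a b).sub (hasFDerivAt_apply c b)
  exact h1.log (sub_ne_zero.2 h)

lemma chamber_open (n : ℕ) : IsOpen (chamber n) := by
  have : chamber n = ⋂ i : Fin (2*n), ⋂ j : Fin (2*n), {b | i < j → b i < b j} := by
    ext b; simp [chamber, StrictMono]
  rw [this]
  refine isOpen_iInter_of_finite fun i => isOpen_iInter_of_finite fun j => ?_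
  by_cases h : i < j
  · simp only [h, true_imp_iff]
    exact isOpen_lt (continuous_apply i) (continuous_apply j)
  · simp [h]

lemma chamber_xy {n : ℕ} {b : Fin (2*n) → ℝ} (hb : StrictMono b) (k : Fin n) :
    b (idx n k false) < b (idx n k true) := by
  apply hb; simp [idx, Fin.lt_def]

lemma chamber_yx {n : ℕ} {b : Fin (2*n) → ℝ} (hb : StrictMono b) (j k : Fin n) (h : j < k) :
    b (idx n j true) < b (idx n k false) := by
  apply hb
  have h' : j.val < k.val := h
  simp only [idx, Fin.lt_def]
  simp
  omega

/-- Expanded logarithm of the weight. -/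
noncomputable def lW (n : ℕ) (u : Fin (2*n) → ℝ) (σ : Fin n → Bool) : ℝ :=
  ∑ p ∈ Finset.univ.filter (fun p : Fin n × Fin n => p.1 < p.2),
    sgn σ p.1 * sgn σ p.2 / 4 *
      (Real.log (u (idx n p.1 true) - u (idx n p.2 true)) +
       Real.log (u (idx n p.1 false) - u (idx n p.2 false)) -
       (Real.log (u (idx n p.1 true) - u (idx n p.2 false)) +
       Real.log (u (idx n p.1 false) - u (idx n p.2 true))))

lemma WA_eq_lW (n : ℕ) (u : Fin (2*n) → ℝ) (hu : StrictMono u) (σ : Fin n → Bool) :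
    WA (fun k => u (idx n k false)) (fun k => u (idx n k true)) σ = Real.exp (lW n u σ) := by
  unfold WA lW
  congr 1
  apply Finset.sum_congr rfl
  intro p hp
  have hlt : p.1 < p.2 := by simpa using hp
  have hne : ∀ s t, u (idx n p.1 s) - u (idx n p.2 t) ≠ 0 := by
    intro s t h
    have := hu.injective (sub_eq_zero.1 h)
    rw [idx_inj] at this
    exact hlt.ne this.1
  unfold chiA
  rw [Real.log_div (mul_ne_zero (hne _ _) (hne _ _)) (mul_ne_zero (hne _ _) (hne _ _)),
    Real.log_mul (hne _ _) (hne _ _), Real.log_mul (hne _ _) (hne _ _)]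

lemma prod_eq_WA (n : ℕ) (u : Fin (2*n) → ℝ) (hu : StrictMono u) (σ : Fin n → Bool) :
    ∏ p ∈ Finset.univ.filter (fun p : Fin n × Fin n => p.1 < p.2),
      chi n u p.1 p.2 ^ (sgn σ p.1 * sgn σ p.2 / 4) =
    WA (fun k => u (idx n k false)) (fun k => u (idx n k true)) σ := by
  unfold WA
  rw [Real.exp_sum]
  apply Finset.prod_congr rfl
  intro p hp
  have hlt : p.1 < p.2 := by simpa using hp
  have hpos : 0 < chi n u p.1 p.2 := by
    have h1 := chamber_xy hu p.1
    have h2 := chamber_xy hu p.2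
    have h3 := chamber_yx hu _ _ hlt
    unfold chi
    apply div_pos <;> apply mul_pos_of_neg_of_neg <;> linarith
  rw [Real.rpow_def_of_pos hpos, mul_comm]
  rfl

lemma logZ_eq (n : ℕ) (u : Fin (2*n) → ℝ) (hu : StrictMono u) :
    Real.log (Zfun n u) =
      ∑ k : Fin n, (-(1:ℝ)/8) * Real.log (u (idx n k true) - u (idx n k false)) +
      (1/2) * Real.log (∑ σ : Fin n → Bool, Real.exp (lW n u σ)) := by
  unfold Zfun
  have hS : 0 < ∑ σ : Fin n → Bool, Real.exp (lW n u σ) :=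
    Finset.sum_pos (fun σ _ => Real.exp_pos _) Finset.univ_nonempty
  have hpos : ∀ k : Fin n, 0 < u (idx n k true) - u (idx n k false) := fun k =>
    sub_pos.2 (chamber_xy hu k)
  simp only [prod_eq_WA n u hu, WA_eq_lW n u hu]
  rw [Real.log_mul (Finset.prod_pos (fun k _ => Real.rpow_pos_of_pos (hpos k) _)).ne'
    (Real.rpow_pos_of_pos hS _).ne', Real.log_rpow hS,
    Real.log_prod (fun k _ => (Real.rpow_pos_of_pos (hpos k) _).ne')]
  congr 1
  exact Finset.sum_congr rfl (fun k _ => Real.log_rpow (hpos k) _)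

/-- Derivative of the expanded log-weight. -/
lemma lW_deriv (n : ℕ) (b : Fin (2*n) → ℝ) (hb : StrictMono b) (i0 : Fin n) (σ : Fin n → Bool) :
    ∃ L : (Fin (2*n) → ℝ) →L[ℝ] ℝ, HasFDerivAt (fun u => lW n u σ) L b ∧
      L (Pi.single (idx n i0 false) 1) = ∑ k ∈ Finset.univ.erase i0,
        sgn σ i0 * sgn σ k / 4 * ((b (idx n i0 false) - b (idx n k false))⁻¹ -
          (b (idx n i0 false) - b (idx n k true))⁻¹) := by
  have hd : ∀ p ∈ Finset.univ.filter (fun p : Fin n × Fin n => p.1 < p.2), ∀ s t,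
      b (idx n p.1 s) ≠ b (idx n p.2 t) := by
    intro p hp s t h
    have hlt : p.1 < p.2 := by simpa using hp
    have := hb.injective h
    rw [idx_inj] at this
    exact hlt.ne this.1
  have H := HasFDerivAt.fun_sum (u := Finset.univ.filter (fun p : Fin n × Fin n => p.1 < p.2))
    (fun p hp => ((((hasFDerivAt_logdiff b (idx n p.1 true) (idx n p.2 true) (hd p hp _ _)).add
      (hasFDerivAt_logdiff b (idx n p.1 false) (idx n p.2 false) (hd p hp _ _))).sub
      ((hasFDerivAt_logdiff b (idx n p.1 true) (idx n p.2 false) (hd p hp _ _)).add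
      (hasFDerivAt_logdiff b (idx n p.1 false) (idx n p.2 true) (hd p hp _ _)))).const_mul
        (sgn σ p.1 * sgn σ p.2 / 4)))
  refine ⟨_, H, ?_⟩
  rw [_root_.sum_apply]
  have hg := sum_pairs_eq i0 (fun a c => sgn σ a * sgn σ c / 4 *
    (((b (idx n a false) - b (idx n c false))⁻¹) *
        ((if a = i0 then 1 else 0) - (if c = i0 then 1 else 0)) -
      (((b (idx n a true) - b (idx n c false))⁻¹) * (0 - (if c = i0 then 1 else 0)) +
        ((b (idx n a false) - b (idx n c true))⁻¹) * ((if a = i0 then 1 else 0) - 0)))) ?_ ?_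
  · refine Eq.trans ?_ (hg.trans ?_)
    · apply Finset.sum_congr rfl
      intro p _
      simp [Pi.single_apply, idx_inj]
    · apply Finset.sum_congr rfl
      intro k hk
      simp [Finset.ne_of_mem_erase hk]
  · intro a c
    have e1 : (b (idx n c false) - b (idx n a false))⁻¹ =
      -(b (idx n a false) - b (idx n c false))⁻¹ := by rw [← inv_neg, neg_sub]
    have e2 : (b (idx n c true) - b (idx n a false))⁻¹ =
      -(b (idx n a false) - b (idx n c true))⁻¹ := by rw [← inv_neg, neg_sub]
    have e3 : (b (idx n c false) - b (idx n a true))⁻¹ =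
      -(b (idx n a true) - b (idx n c false))⁻¹ := by rw [← inv_neg, neg_sub]
    rw [e1, e2, e3]
    ring
  · intro a c ha hc
    simp [ha, hc]

lemma dlogZ (n : ℕ) (b : Fin (2*n) → ℝ) (hb : StrictMono b) (i0 : Fin n) :
    pderiv' (idx n i0 false) (fun u => Real.log (Zfun n u)) b =
      1/8 * (b (idx n i0 true) - b (idx n i0 false))⁻¹ +
      1/2 * ((∑ σ, WA (fun k => b (idx n k false)) (fun k => b (idx n k true)) σ)⁻¹ *
        ∑ σ, WA (fun k => b (idx n k false)) (fun k => b (idx n k true)) σ *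
          ∑ k ∈ Finset.univ.erase i0,
        sgn σ i0 * sgn σ k / 4 * ((b (idx n i0 false) - b (idx n k false))⁻¹ -
          (b (idx n i0 false) - b (idx n k true))⁻¹)) := by
  choose L hL hLv using lW_deriv n b hb i0
  have hev : (fun u => Real.log (Zfun n u)) =ᶠ[nhds b] fun u =>
      ∑ k : Fin n, (-(1:ℝ)/8) * Real.log (u (idx n k true) - u (idx n k false)) +
      (1/2) * Real.log (∑ σ : Fin n → Bool, Real.exp (lW n u σ)) := by
    filter_upwards [(chamber_open n).mem_nhds hb] with u hu
    exact logZ_eq n u hu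
  have hS : 0 < ∑ σ : Fin n → Bool, Real.exp (lW n b σ) :=
    Finset.sum_pos (fun σ _ => Real.exp_pos _) Finset.univ_nonempty
  have H1 := HasFDerivAt.fun_sum (u := (Finset.univ : Finset (Fin n))) (fun k _ =>
    (hasFDerivAt_logdiff b (idx n k true) (idx n k false) (chamber_xy hb k).ne').const_mul
      (-(1:ℝ)/8))
  have H2 := ((HasFDerivAt.fun_sum (u := (Finset.univ : Finset (Fin n → Bool))) (fun σ _ =>
    (hL σ).exp)).log hS.ne').const_mul (1/2)
  have H := (H1.add H2).congr_of_eventuallyEq hev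
  unfold pderiv'
  rw [H.fderiv]
  simp only [WA_eq_lW n b hb]
  simp only [add_apply, smul_apply,
    _root_.sum_apply, hLv, smul_eq_mul, sub_apply,
    ContinuousLinearMap.proj_apply]
  congr 1
  rw [Finset.sum_eq_single i0]
  · simp [Pi.single_apply, idx_inj]; ring
  · intro k _ hk
    simp [Pi.single_apply, idx_inj, hk]
  · simp

lemma key_real {n : ℕ} (x y : Fin n → ℝ) (i0 : Fin n) :
    (∑ σ, WA x y σ)⁻¹ * ∑ σ, WA x y σ * ∑ j ∈ Finset.univ.erase i0, (x i0 - aA x y i0 σ j)⁻¹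
      - (1 / (2 * (x i0 - y i0)) + ∑ k ∈ Finset.univ.erase i0,
          (1 / (2 * (x i0 - x k)) + 1 / (2 * (x i0 - y k)))) =
    4 * (1/8 * (y i0 - x i0)⁻¹ + 1/2 * ((∑ σ, WA x y σ)⁻¹ * ∑ σ, WA x y σ *
          ∑ k ∈ Finset.univ.erase i0, sgn σ i0 * sgn σ k / 4 *
            ((x i0 - x k)⁻¹ - (x i0 - y k)⁻¹))) := by
  have hS : 0 < ∑ σ, WA x y σ := 
    Finset.sum_pos (fun σ _ => Real.exp_pos _) Finset.univ_nonempty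
  have h1 : ∑ σ, WA x y σ * ∑ j ∈ Finset.univ.erase i0, (x i0 - aA x y i0 σ j)⁻¹ =
      (∑ σ, WA x y σ) * ∑ k ∈ Finset.univ.erase i0,
          (1 / (2 * (x i0 - x k)) + 1 / (2 * (x i0 - y k))) +
      2 * ∑ σ, WA x y σ *
          ∑ k ∈ Finset.univ.erase i0, sgn σ i0 * sgn σ k / 4 *
            ((x i0 - x k)⁻¹ - (x i0 - y k)⁻¹) := by
    rw [Finset.sum_mul, Finset.mul_sum, ← Finset.sum_add_distrib]
    apply Finset.sum_congr rfl
    intro σ _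
    rw [mul_left_comm, ← mul_add]
    congr 1
    rw [Finset.mul_sum, ← Finset.sum_add_distrib]
    apply Finset.sum_congr rfl
    intro k _
    simp only [one_div, mul_inv]
    by_cases h : σ k = σ i0
    · simp only [aA, h, if_true, sgn]
      cases σ i0 <;> simp <;> ring
    · simp only [aA, h, if_false, sgn]
      revert h
      cases σ i0 <;> cases σ k <;> simp <;> ring
  rw [h1]
  have e : 1 / (2 * (x i0 - y i0)) = - (1/2 * (y i0 - x i0)⁻¹) := by
    rw [← neg_sub (y i0), one_div, mul_inv, inv_neg]; ring
  rw [e]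
  field_simp
  ring

/-- The logarithmic derivative of an admissible polynomial at the tip. -/
lemma P_logderiv (n : ℕ) (b : Fin (2*n) → ℝ) (hb : StrictMono b) (P : Polynomial ℂ)
    (i0 : Fin n) (hd : P.natDegree ≤ n - 1)
    (hm : ∀ i, i ≠ i0 → P.eval (b (idx n i false) : ℂ) *
        (∏ j ∈ Eset n i, √ |b (idx n i true) - b j| : ℝ) =
      -(P.eval (b (idx n i true) : ℂ) * (∏ j ∈ Eset n i, √ |b (idx n i false) - b j| : ℝ))) :
    P.derivative.eval (b (idx n i0 false) : ℂ) *
      ((∑ σ, WA (fun k => b (idx n k false)) (fun k => b (idx n k true)) σ : ℝ) : ℂ) =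
    P.eval (b (idx n i0 false) : ℂ) *
      ((∑ σ, WA (fun k => b (idx n k false)) (fun k => b (idx n k true)) σ *
        ∑ j ∈ Finset.univ.erase i0, (b (idx n i0 false) -
          aA (fun k => b (idx n k false)) (fun k => b (idx n k true)) i0 σ j)⁻¹ : ℝ) : ℂ) := by
  set x : Fin n → ℝ := fun k => b (idx n k false) with hx
  set y : Fin n → ℝ := fun k => b (idx n k true) with hy
  have hxy : ∀ k, x k < y k := fun k => chamber_xy hb k
  have hyx : ∀ j k, j < k → y j < x k := fun j k h => chamber_yx hb j k h
  have hQ0 := QA_eval_base x y hxy hyx i0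
  have hQ1 := QA_deriv_base x y hxy hyx i0
  set Q := QA x y i0 with hQ
  set Qc : Polynomial ℂ := Q.map Complex.ofRealHom with hQc
  have hev : ∀ t : ℝ, Qc.eval (t : ℂ) = ((Q.eval t : ℝ) : ℂ) := by
    intro t
    exact Polynomial.eval_map_apply (f := Complex.ofRealHom) (p := Q) t
  have hevd : ∀ t : ℝ, Qc.derivative.eval (t : ℂ) = ((Q.derivative.eval t : ℝ) : ℂ) := by
    intro t
    rw [hQc, Polynomial.derivative_map]
    exact Polynomial.eval_map_apply (f := Complex.ofRealHom) (p := Q.derivative) t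
  have hR : Polynomial.C (Qc.eval (x i0 : ℂ)) * P - Polynomial.C (P.eval (x i0 : ℂ)) * Qc = 0 := by
    apply complex_unique i0 x y hxy hyx
    · refine (Polynomial.natDegree_sub_le _ _).trans (max_le ?_ ?_)
      · exact (Polynomial.natDegree_C_mul_le _ _).trans hd
      · refine (Polynomial.natDegree_C_mul_le _ _).trans ?_
        exact (Polynomial.natDegree_map_le).trans (QA_natDegree x y i0)
    · simp; ring
    · intro i hi
      refine ⟨∏ j ∈ Eset n i, √ |y i - b j|, ∏ j ∈ Eset n i, √ |x i - b j|, ?_, ?_, ?_⟩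
      · apply Finset.prod_pos
        intro j hj
        apply Real.sqrt_pos.2 (abs_pos.2 (sub_ne_zero.2 _))
        intro h
        rw [← hb.injective h] at hj
        simp [Eset] at hj
      · apply Finset.prod_pos
        intro j hj
        apply Real.sqrt_pos.2 (abs_pos.2 (sub_ne_zero.2 _))
        intro h
        rw [← hb.injective h] at hj
        simp [Eset] at hj
      · have h1 := hm i hi
        have h2 := QA_match x y hxy hyx i0 i hi
        rw [← hQ] at h2
        have e1 := prod_Eset n i (fun j => √ |y i - b j|)
        have e2 := prod_Eset n i (fun j => √ |x i - b j|)
        have h3 : Qc.eval (x i : ℂ) * (∏ j ∈ Eset n i, √ |y i - b j| : ℝ) =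
            -(Qc.eval (y i : ℂ) * (∏ j ∈ Eset n i, √ |x i - b j| : ℝ)) := by
          rw [hev, hev, e1, e2]
          exact_mod_cast h2
        simp only [Polynomial.eval_sub, Polynomial.eval_C_mul]
        linear_combination (Qc.eval (x i0 : ℂ)) * h1 - (P.eval (x i0 : ℂ)) * h3
  have := congrArg (fun p => p.derivative.eval (x i0 : ℂ)) hR
  simp only [Polynomial.derivative_sub, Polynomial.derivative_C_mul, Polynomial.eval_sub,
    Polynomial.eval_C_mul, Polynomial.derivative_zero, Polynomial.eval_zero] at this
  rw [hev, hevd, hQ0, hQ1] at this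
  linear_combination this

/-- expansion of the observable `f = f_P` at the tip `b₁`:
`f(z) = i (z − b₁)^{−1/2} (1 + 2𝒜(b)(z − b₁) + o(z − b₁))` as `z → b₁` in `ℍ`,
where `𝒜(b) = 2 ∂_{b₁} log Z(b)`. -/
theorem observable_expansion_at_tip (n : ℕ) (hn : 1 ≤ n)
    (b : Fin (2*n) → ℝ) (hb : b ∈ chamber n)
    (P : Polynomial ℂ) (hP : Admissible n hn b P) :
    Filter.Tendsto
      (fun z : ℂ =>
        ((z - (b ⟨0, by omega⟩ : ℂ)) ^ ((1:ℂ)/2) * fP n b P z - Complex.I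
          - 4 * Complex.I
              * ((pderiv' ⟨0, by omega⟩ (fun x => Real.log (Zfun n x)) b : ℝ) : ℂ)
              * (z - (b ⟨0, by omega⟩ : ℂ)))
        / (z - (b ⟨0, by omega⟩ : ℂ)))
      (nhdsWithin (b ⟨0, by omega⟩ : ℂ) UHP) (nhds 0) := by
  obtain ⟨hd, hm, ht⟩ := hP
  have hb' : StrictMono b := hb
  have hi0 : ∃ i0 : Fin n, i0 = ⟨0, hn⟩ := ⟨_, rfl⟩
  obtain ⟨i0, hi0⟩ := hi0
  have hj0 : (⟨0, by omega⟩ : Fin (2*n)) = idx n i0 false := by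
    subst hi0; rfl
  rw [hj0] at ht ⊢
  have hPd := P_logderiv n b hb' P i0 hd (by
    intro i hi
    have h1 : 1 ≤ i.val := by
      have : i.val ≠ 0 := by
        intro h; apply hi; rw [hi0]; exact Fin.ext h
      omega
    obtain ⟨L, hL1, hL2⟩ := hm i h1
    exact P_match n b hb' P i L hL1 hL2)
  have hkey := key_real (fun k => b (idx n k false)) (fun k => b (idx n k true)) i0
  rw [dlogZ n b hb' i0]
  beta_reduce at hkey
  rw [← sum_Eset n i0 (fun j => 1 / (2 * (b (idx n i0 false) - b j)))] at hkey
  have hS : 0 < ∑ σ, WA (fun k => b (idx n k false)) (fun k => b (idx n k true)) σ :=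
    Finset.sum_pos (fun σ _ => Real.exp_pos _) Finset.univ_nonempty
  generalize 1 / 8 * (b (idx n i0 true) - b (idx n i0 false))⁻¹ + _ = A at hkey ⊢
  generalize (∑ σ, WA (fun k => b (idx n k false)) (fun k => b (idx n k true)) σ *
        ∑ j ∈ Finset.univ.erase i0, (b (idx n i0 false) -
          aA (fun k => b (idx n k false)) (fun k => b (idx n k true)) i0 σ j)⁻¹) = Q1 at hkey hPd
  generalize (∑ σ, WA (fun k => b (idx n k false)) (fun k => b (idx n k true)) σ) = S at *
  set E : Finset (Fin (2*n)) := Finset.univ.erase (idx n i0 false) with hE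
  have hsum : ∑ j ∈ E, 1 / (2 * (b (idx n i0 false) - b j)) =
      1 / (2 * (b (idx n i0 false) - b (idx n i0 true))) +
        ∑ j ∈ Eset n i0, 1 / (2 * (b (idx n i0 false) - b j)) := by
    rw [Eset, Finset.erase_right_comm,
      Finset.add_sum_erase _ (fun j => 1 / (2 * (b (idx n i0 false) - b j)))]
    simp [hE, idx_inj]
  rw [← hsum] at hkey
  set p := b (idx n i0 false) with hp
  have hne : ∀ j ∈ E, b j ≠ p := by
    intro j hj h
    exact Finset.ne_of_mem_erase hj (hb'.injective h)
  have hD := prod_sqB_hasDerivAt E b p hne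
  have hD0 : ∏ j ∈ E, sqB (b j) p p ≠ 0 :=
    Finset.prod_ne_zero_iff.2 (fun j hj => sqB_ne _ _ (hne j hj))
  have hUHP : ∀ z ∈ UHP, (z - (p : ℂ)) ^ ((1:ℂ)/2) * fP n b P z =
      P.eval z / ∏ j ∈ E, sqB (b j) p z := by
    intro z hz
    have e1 := cpow_ne_UHP p z hz
    have e3 : ∏ j ∈ E, sqB (b j) p z = ∏ j ∈ E, (z - (b j : ℂ)) ^ ((1:ℂ)/2) :=
      Finset.prod_congr rfl (fun j _ => (sqB_eq _ _ _ hz).symm)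
    have e4 : ∏ j ∈ E, (z - (b j : ℂ)) ^ ((1:ℂ)/2) ≠ 0 :=
      Finset.prod_ne_zero_iff.2 (fun j _ => cpow_ne_UHP _ _ hz)
    have e5 : Dfun n b z = (z - (p : ℂ)) ^ ((1:ℂ)/2) *
        ∏ j ∈ E, (z - (b j : ℂ)) ^ ((1:ℂ)/2) := by
      unfold Dfun
      rw [hE, hp, Finset.mul_prod_erase _ (fun j => (z - (b j : ℂ)) ^ ((1:ℂ)/2))]
      simp
    rw [e3, fP, e5]
    field_simp
  have hH := (P.hasDerivAt (p : ℂ)).fun_div hD hD0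
  have hval : P.eval (p : ℂ) / ∏ j ∈ E, sqB (b j) p p = Complex.I := by
    have := UHP_neBot p
    refine tendsto_nhds_unique (hH.continuousAt.tendsto.mono_left nhdsWithin_le_nhds) (ht.congr' ?_)
    filter_upwards [self_mem_nhdsWithin] with z hz
    exact hUHP z hz
  have hsl := hasDerivAt_iff_tendsto_slope.1 hH
  have hsub : UHP ⊆ {(p : ℂ)}ᶜ := by
    intro z hz h
    rw [Set.mem_singleton_iff] at h
    rw [h] at hz
    simp [UHP] at hz
  have hsl' := (hsl.mono_left (nhdsWithin_mono _ hsub)).sub_const (4 * Complex.I * (A : ℂ))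
  have hder : (P.derivative.eval (p : ℂ) * (∏ j ∈ E, sqB (b j) p p) -
      P.eval (p : ℂ) * ((∏ j ∈ E, sqB (b j) p p) * ∑ j ∈ E, 1 / (2 * ((p : ℂ) - b j)))) /
      (∏ j ∈ E, sqB (b j) p p) ^ 2 - 4 * Complex.I * (A : ℂ) = 0 := by
    have hkc := congrArg (fun t : ℝ => (t : ℂ)) hkey
    push_cast at hkc
    have hSc : (S : ℂ) ≠ 0 := by exact_mod_cast hS.ne'
    rw [div_eq_iff hD0] at hval
    rw [hval] at hPd ⊢
    generalize ∏ j ∈ E, sqB (b j) p p = D0 at *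
    generalize ∑ j ∈ E, 1 / (2 * ((p : ℂ) - b j)) = T at *
    have e : P.derivative.eval (p : ℂ) = Complex.I * D0 * ((S : ℂ)⁻¹ * Q1) := by
      field_simp
      linear_combination hPd
    rw [e]
    have e2 : ((S : ℂ)⁻¹ * Q1) = 4 * A + T := by linear_combination hkc
    rw [e2]
    field_simp
    ring
  rw [hder] at hsl'
  refine hsl'.congr' ?_
  filter_upwards [self_mem_nhdsWithin] with z hz
  have hz0 : z - (p : ℂ) ≠ 0 := sub_ne_zero.2 (hsub hz)
  rw [hUHP z hz, slope_def_field, hval]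
  field_simp
end

section
/- Let n ≥ 1, let b ∈ X_n, and let P be admissible for b. Define the rational function R(z) = P(z)² / ∏_{j=1}^{2n} (z − b_j) on ℂ ∖ {b_1, …, b_{2n}} (so that R = f_P² on ℍ). Then, as z → b_1 within ℍ, (z − b_1)·R(z) → −1 and ((z − b_1)·R(z) + 1)/(z − b_1) → −8·∂_{b_1}(log Z)(b); equivalently, R has a simple pole at b_1 with expansion (z − b_1)·R(z) = −1 − 8·∂_{b_1}(log Z)(b)·(z − b_1) + o(z − b_1). -/
open scoped BigOperators
open Finset

namespace SleObs

/-- Ordering hypothesis for the pairs of endpoints. -/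
structure Ordered {n : ℕ} (a c : Fin n → ℝ) : Prop where
  lt : ∀ k, a k < c k
  sep : ∀ i j, i < j → c i < a j

/-- cross ratio in terms of the pairs. -/
noncomputable def ch {n : ℕ} (a c : Fin n → ℝ) (i j : Fin n) : ℝ :=
  ((c i - c j) * (a i - a j)) / ((c i - a j) * (a i - c j))

theorem Ordered.signs {n : ℕ} {a c : Fin n → ℝ} (h : Ordered a c) {i j : Fin n} (hij : i ≠ j) :
    (0 < a i - a j ∧ 0 < a i - c j ∧ 0 < c i - a j ∧ 0 < c i - c j) ∨
    (a i - a j < 0 ∧ a i - c j < 0 ∧ c i - a j < 0 ∧ c i - c j < 0) := by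
  have h1 := h.lt i
  have h2 := h.lt j
  rcases lt_or_gt_of_ne hij with h3 | h3
  · have := h.sep _ _ h3
    right; refine ⟨?_, ?_, ?_, ?_⟩ <;> linarith
  · have := h.sep _ _ h3
    left; refine ⟨?_, ?_, ?_, ?_⟩ <;> linarith

theorem Ordered.ch_pos {n : ℕ} {a c : Fin n → ℝ} (h : Ordered a c) {i j : Fin n} (hij : i ≠ j) :
    0 < ch a c i j := by
  unfold ch
  rcases h.signs hij with ⟨h1, h2, h3, h4⟩ | ⟨h1, h2, h3, h4⟩
  · positivity
  · exact div_pos (mul_pos_of_neg_of_neg h4 h1) (mul_pos_of_neg_of_neg h3 h2)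

theorem ch_symm {n : ℕ} (a c : Fin n → ℝ) (i j : Fin n) : ch a c i j = ch a c j i := by
  unfold ch
  rw [show (c i - c j) * (a i - a j) = (c j - c i) * (a j - a i) by ring,
    show (c i - a j) * (a i - c j) = (c j - a i) * (a j - c i) by ring]

theorem sqrt_aux {p q r s : ℝ} (h : (0 < p ∧ 0 < q ∧ 0 < r ∧ 0 < s) ∨
    (p < 0 ∧ q < 0 ∧ r < 0 ∧ s < 0)) :
    p * √(r * s) = r * √(s * p / (r * q)) * √(p * q) := by
  have key : √(s * p / (r * q)) * √(p * q) = |p| / |r| * √(r * s) := by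
    have hpos : 0 ≤ s * p / (r * q) := by
      rcases h with ⟨h1, h2, h3, h4⟩ | ⟨h1, h2, h3, h4⟩
      · positivity
      · exact (div_pos (mul_pos_of_neg_of_neg h4 h1) (mul_pos_of_neg_of_neg h3 h2)).le
    have hr : r ≠ 0 := by rcases h with h | h; exacts [h.2.2.1.ne', h.2.2.1.ne]
    have hq : q ≠ 0 := by rcases h with h | h; exacts [h.2.1.ne', h.2.1.ne]
    rw [← Real.sqrt_mul hpos, ← abs_div, ← Real.sqrt_sq_eq_abs, ← Real.sqrt_mul (sq_nonneg _)]
    congr 1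
    field_simp
  rw [mul_assoc, key]
  rcases h with ⟨h1, h2, h3, h4⟩ | ⟨h1, h2, h3, h4⟩
  · rw [abs_of_pos h1, abs_of_pos h3]; field_simp
  · rw [abs_of_neg h1, abs_of_neg h3]
    have := h3.ne
    field_simp

theorem pair_plus {n : ℕ} {a c : Fin n → ℝ} (h : Ordered a c) {i j : Fin n} (hij : i ≠ j) :
    (a i - a j) * √((c i - a j) * (c i - c j)) =
      (c i - a j) * ch a c i j ^ ((1 : ℝ) / 2) * √((a i - a j) * (a i - c j)) := by
  rw [← Real.sqrt_eq_rpow]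
  exact sqrt_aux (h.signs hij)

theorem pair_minus {n : ℕ} {a c : Fin n → ℝ} (h : Ordered a c) {i j : Fin n} (hij : i ≠ j) :
    (a i - c j) * √((c i - a j) * (c i - c j)) =
      (c i - c j) * ch a c i j ^ (-(1 : ℝ) / 2) * √((a i - a j) * (a i - c j)) := by
  rw [neg_div, Real.rpow_neg (h.ch_pos hij).le, ← Real.sqrt_eq_rpow, ← Real.sqrt_inv]
  unfold ch
  rw [inv_div, mul_comm (c i - a j) (c i - c j), mul_comm (a i - a j) (a i - c j),
    mul_comm (c i - c j) (a i - a j)]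
  have := @sqrt_aux (a i - c j) (a i - a j) (c i - c j) (c i - a j) (by
    have := h.signs hij; tauto)
  rw [this, mul_comm (a i - a j) (c i - c j)]

/-- Gibbs weight. -/
noncomputable def wt {n : ℕ} (a c : Fin n → ℝ) (σ : Fin n → Bool) : ℝ :=
  ∏ p ∈ Finset.univ.filter (fun p : Fin n × Fin n => p.1 < p.2),
      ch a c p.1 p.2 ^ (sgn σ p.1 * sgn σ p.2 / 4)

/-- flipping a spin. -/
def flip {n : ℕ} (i : Fin n) (σ : Fin n → Bool) : Fin n → Bool := Function.update σ i (!σ i)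

theorem flip_flip {n : ℕ} (i : Fin n) (σ : Fin n → Bool) : flip i (flip i σ) = σ := by
  funext j
  by_cases h : j = i
  · subst h; simp [flip]
  · simp [flip, h]

theorem flip_ne {n : ℕ} {i j : Fin n} (h : j ≠ i) (σ : Fin n → Bool) : flip i σ j = σ j := by
  simp [flip, h]

theorem flip_self {n : ℕ} (i : Fin n) (σ : Fin n → Bool) : flip i σ i = !σ i := by
  simp [flip]

theorem sgn_flip_self {n : ℕ} (i : Fin n) (σ : Fin n → Bool) : sgn (flip i σ) i = - sgn σ i := by
  unfold sgn; rw [flip_self]; cases σ i <;> simp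

theorem sgn_flip_ne {n : ℕ} {i j : Fin n} (h : j ≠ i) (σ : Fin n → Bool) :
    sgn (flip i σ) j = sgn σ j := by
  unfold sgn; rw [flip_ne h]

theorem prod_pairs {n : ℕ} (i : Fin n) (g : Fin n → Fin n → ℝ) (hs : ∀ p q, g p q = g q p)
    (h1 : ∀ p q, p ≠ i → q ≠ i → g p q = 1) :
    ∏ p ∈ Finset.univ.filter (fun p : Fin n × Fin n => p.1 < p.2), g p.1 p.2 =
      ∏ j ∈ Finset.univ.erase i, g i j := by
  symm
  have : ∏ p ∈ Finset.univ.filter (fun p : Fin n × Fin n => p.1 < p.2), g p.1 p.2 =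
      ∏ p ∈ (Finset.univ.filter (fun p : Fin n × Fin n => p.1 < p.2)).filter
        (fun p => p.1 = i ∨ p.2 = i), g p.1 p.2 := by
    symm
    apply Finset.prod_filter_of_ne
    intro p _ hp
    by_contra hcon
    push Not at hcon
    exact hp (h1 _ _ hcon.1 hcon.2)
  rw [this]
  refine Finset.prod_bij' (fun j _ => if i < j then (i, j) else (j, i))
    (fun p _ => if p.1 = i then p.2 else p.1) ?_ ?_ ?_ ?_ ?_
  · intro j hj
    simp only [Finset.mem_erase, Finset.mem_univ, and_true] at hj
    by_cases h : i < j
    · simp [h]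
    · have : j < i := lt_of_le_of_ne (not_lt.mp h) hj
      simp [h, this]
  · rintro ⟨p, q⟩ hp
    simp only [Finset.mem_filter, Finset.mem_univ, true_and] at hp
    simp only [Finset.mem_erase, Finset.mem_univ, and_true]
    split_ifs with h
    · subst h; exact hp.1.ne'
    · exact h
  · intro j hj
    simp only [Finset.mem_erase, Finset.mem_univ, and_true] at hj
    by_cases h : i < j
    · simp [h]
    · simp [h, hj]
  · rintro ⟨p, q⟩ hp
    simp only [Finset.mem_filter, Finset.mem_univ, true_and] at hp
    by_cases h : p = i
    · subst h; simp [hp.1]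
    · have hq : q = i := by tauto
      subst hq
      simp [h, not_lt.mpr hp.1.le]
  · intro j hj
    by_cases h : i < j
    · simp [h]
    · simp [h, hs i j]

theorem wt_flip {n : ℕ} {a c : Fin n → ℝ} (h : Ordered a c) (i : Fin n) (σ : Fin n → Bool) :
    wt a c σ = wt a c (flip i σ) *
      ∏ j ∈ Finset.univ.erase i, ch a c i j ^ (sgn σ i * sgn σ j / 2) := by
  have := prod_pairs i (fun p q => ch a c p q ^ (if p = i ∨ q = i then sgn σ p * sgn σ q / 2 else 0))
    (by
      intro p q
      rw [ch_symm a c p q, mul_comm (sgn σ p)]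
      simp only [or_comm])
    (by intro p q hp hq; simp [hp, hq])
  simp only [true_or, if_true] at this
  rw [← this]
  unfold wt
  rw [← Finset.prod_mul_distrib]
  refine Finset.prod_congr rfl ?_
  rintro ⟨p, q⟩ hp
  simp only [Finset.mem_filter, Finset.mem_univ, true_and] at hp
  rw [← Real.rpow_add (h.ch_pos hp.ne)]
  congr 1
  simp only
  by_cases h1 : p = i
  · subst h1
    rw [sgn_flip_self, sgn_flip_ne hp.ne']
    simp; ring
  · by_cases h2 : q = i
    · subst h2
      rw [sgn_flip_self, sgn_flip_ne hp.ne]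
      simp; ring
    · rw [sgn_flip_ne h1, sgn_flip_ne h2]; simp [h1, h2]

theorem wt_pos {n : ℕ} {a c : Fin n → ℝ} (h : Ordered a c) (σ : Fin n → Bool) : 0 < wt a c σ := by
  unfold wt
  refine Finset.prod_pos ?_
  rintro ⟨p, q⟩ hp
  simp only [Finset.mem_filter, Finset.mem_univ, true_and] at hp
  exact Real.rpow_pos_of_pos (h.ch_pos hp.ne) _

/-- chosen endpoint of the `j`th pair. -/
noncomputable def xs {n : ℕ} (a c : Fin n → ℝ) (o : Fin n) (σ : Fin n → Bool) (j : Fin n) : ℝ :=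
  if σ o = σ j then a j else c j

/-- explicit observable polynomial. -/
noncomputable def Q {n : ℕ} (a c : Fin n → ℝ) (o : Fin n) : Polynomial ℝ :=
  ∑ σ : Fin n → Bool, Polynomial.C (wt a c σ) * ∏ j ∈ Finset.univ.erase o,
    (Polynomial.C ((a o - xs a c o σ j)⁻¹) * (Polynomial.X - Polynomial.C (xs a c o σ j)))

theorem Q_eval {n : ℕ} (a c : Fin n → ℝ) (o : Fin n) (y : ℝ) :
    (Q a c o).eval y = ∑ σ : Fin n → Bool, wt a c σ * ∏ j ∈ Finset.univ.erase o,
      ((a o - xs a c o σ j)⁻¹ * (y - xs a c o σ j)) := by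
  simp [Q, Polynomial.eval_finsetSum, Polynomial.eval_prod]

theorem Q_natDegree {n : ℕ} (a c : Fin n → ℝ) (o : Fin n) : (Q a c o).natDegree ≤ n - 1 := by
  unfold Q
  refine Polynomial.natDegree_sum_le_of_forall_le _ _ ?_
  intro σ _
  refine (Polynomial.natDegree_C_mul_le _ _).trans ?_
  refine (Polynomial.natDegree_prod_le _ _).trans ?_
  calc _ ≤ ∑ j ∈ Finset.univ.erase o, 1 := by
        refine Finset.sum_le_sum ?_
        intro j _
        refine (Polynomial.natDegree_C_mul_le _ _).trans ?_
        simp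
    _ = n - 1 := by simp

theorem xs_ne {n : ℕ} {a c : Fin n → ℝ} (h : Ordered a c) {o j : Fin n} (hj : j ≠ o)
    (σ : Fin n → Bool) : a o - xs a c o σ j ≠ 0 := by
  unfold xs
  rcases h.signs hj.symm with ⟨h1, h2, h3, h4⟩ | ⟨h1, h2, h3, h4⟩ <;> split_ifs
  exacts [h1.ne', h2.ne', h1.ne, h2.ne]

theorem term_pair {n : ℕ} {a c : Fin n → ℝ} (h : Ordered a c) {o i j : Fin n} (hij : i ≠ j)
    (σ : Fin n → Bool) (hσ : σ o = σ i) :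
    (a i - xs a c o σ j) * √((c i - a j) * (c i - c j)) =
      (c i - xs a c o σ j) * (ch a c i j ^ (sgn σ i * sgn σ j / 2) *
        √((a i - a j) * (a i - c j))) := by
  unfold xs sgn
  rw [hσ]
  by_cases hs : σ i = σ j
  · rw [if_pos hs, pair_plus h hij, ← hs]
    cases σ i <;> norm_num <;> ring
  · rw [if_neg hs, pair_minus h hij]
    have : σ j = !σ i := by cases h1 : σ i <;> cases h2 : σ j <;> simp_all
    rw [this]
    cases σ i <;> norm_num <;> ring

theorem Q_match {n : ℕ} {a c : Fin n → ℝ} (h : Ordered a c) {o i : Fin n} (hi : i ≠ o) :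
    (Q a c o).eval (a i) * ∏ j ∈ Finset.univ.erase i, √((c i - a j) * (c i - c j)) =
    - ((Q a c o).eval (c i) * ∏ j ∈ Finset.univ.erase i, √((a i - a j) * (a i - c j))) := by
  have hK1 : o ∈ Finset.univ.erase i := by simp [hi.symm]
  have hK2 : i ∈ Finset.univ.erase o := by simp [hi]
  rw [Q_eval, Q_eval]
  rw [← Equiv.sum_comp (Function.Involutive.toPerm (flip i) (flip_flip i))]
  rw [Finset.sum_mul, Finset.sum_mul, ← Finset.sum_neg_distrib]
  refine Finset.sum_congr rfl ?_
  intro σ _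
  change wt a c (flip i σ) * (∏ j ∈ Finset.univ.erase o, ((a o - xs a c o (flip i σ) j)⁻¹ *
    (a i - xs a c o (flip i σ) j))) * _ = _
  rw [← Finset.mul_prod_erase _ _ hK2, ← Finset.mul_prod_erase _ _ hK2]
  by_cases hσ : σ o = σ i
  · have e1 : xs a c o (flip i σ) i = c i := by
      unfold xs; rw [flip_self, flip_ne hi.symm, hσ]; simp
    have e2 : xs a c o σ i = a i := by unfold xs; simp [hσ]
    have e3 : ∀ j ∈ (Finset.univ.erase o).erase i, xs a c o (flip i σ) j = xs a c o σ j := by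
      intro j hj
      unfold xs; rw [flip_ne hi.symm, flip_ne (Finset.ne_of_mem_erase hj)]
    rw [e1, e2, wt_flip h i σ]
    rw [Finset.prod_congr rfl (fun j hj => by rw [e3 j hj] :
      ∀ j ∈ (Finset.univ.erase o).erase i, (a o - xs a c o (flip i σ) j)⁻¹ *
        (a i - xs a c o (flip i σ) j) = (a o - xs a c o σ j)⁻¹ * (a i - xs a c o σ j))]
    rw [← Finset.mul_prod_erase _ _ hK1, ← Finset.mul_prod_erase _ _ hK1,
      ← Finset.mul_prod_erase _ _ hK1]
    rw [Finset.erase_right_comm (a := i) (b := o)]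
    have f1 := term_pair h hi σ hσ
    have f2 : ∏ j ∈ (Finset.univ.erase o).erase i,
        ((a i - xs a c o σ j) * √((c i - a j) * (c i - c j))) =
      ∏ j ∈ (Finset.univ.erase o).erase i, ((c i - xs a c o σ j) *
        (ch a c i j ^ (sgn σ i * sgn σ j / 2) * √((a i - a j) * (a i - c j)))) :=
      Finset.prod_congr rfl (fun j hj => term_pair h (Finset.ne_of_mem_erase hj).symm σ hσ)
    simp only [Finset.prod_mul_distrib] at f2 ⊢
    have e4 : xs a c o σ o = a o := by simp [xs]
    rw [e4] at f1
    have g1 : a o - a i ≠ 0 := by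
      rcases h.signs hi with h | h
      · intro h'; linarith [h.1]
      · intro h'; linarith [h.1]
    have g2 : a o - c i ≠ 0 := by
      rcases h.signs hi with h | h
      · intro h'; linarith [h.2.2.1]
      · intro h'; linarith [h.2.2.1]
    generalize (∏ j ∈ (Finset.univ.erase o).erase i, (a i - xs a c o σ j)) = A1 at *
    generalize (∏ j ∈ (Finset.univ.erase o).erase i, (c i - xs a c o σ j)) = A2 at *
    generalize (∏ j ∈ (Finset.univ.erase o).erase i, (a o - xs a c o σ j)⁻¹) = A3 at *
    generalize (∏ j ∈ (Finset.univ.erase o).erase i, √((c i - a j) * (c i - c j))) = V at *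
    generalize (∏ j ∈ (Finset.univ.erase o).erase i, √((a i - a j) * (a i - c j))) = U at *
    generalize (∏ j ∈ (Finset.univ.erase o).erase i, ch a c i j ^ (sgn σ i * sgn σ j / 2)) = E at *
    generalize √((c i - a o) * (c i - c o)) = v at *
    generalize √((a i - a o) * (a i - c o)) = u at *
    generalize ch a c i o ^ (sgn σ i * sgn σ o / 2) = e at *
    generalize wt a c (flip i σ) = w at *
    field_simp
    linear_combination (-w * A3 * (a i - c i) * A1 * V) * f1 -
      (w * A3 * (a i - c i)) * (c i - a o) * e * u * f2
  · have e1 : xs a c o (flip i σ) i = a i := by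
      unfold xs; rw [flip_self, flip_ne hi.symm]
      have : σ o = !σ i := by cases h1 : σ i <;> cases h2 : σ o <;> simp_all
      simp [this]
    have e2 : xs a c o σ i = c i := by unfold xs; simp [hσ]
    rw [e1, e2]; simp

theorem Q_eval_o {n : ℕ} {a c : Fin n → ℝ} (h : Ordered a c) (o : Fin n) :
    (Q a c o).eval (a o) = ∑ σ : Fin n → Bool, wt a c σ := by
  rw [Q_eval]
  refine Finset.sum_congr rfl fun σ _ => ?_
  rw [Finset.prod_eq_one, mul_one]
  intro j hj
  exact inv_mul_cancel₀ (xs_ne h (Finset.ne_of_mem_erase hj) σ)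

theorem hasDerivAt_prod_log {ι 𝕜 : Type*} [NontriviallyNormedField 𝕜] (s : Finset ι)
    (f : ι → 𝕜 → 𝕜) (g : ι → 𝕜) (x : 𝕜)
    (h : ∀ i ∈ s, HasDerivAt (f i) (f i x * g i) x) :
    HasDerivAt (fun t => ∏ i ∈ s, f i t) ((∏ i ∈ s, f i x) * ∑ i ∈ s, g i) x := by
  classical
  induction s using Finset.induction_on with
  | empty => simpa using hasDerivAt_const x (1 : 𝕜)
  | insert i s hi ih =>
    have h1 := h i (Finset.mem_insert_self _ _)
    have h2 := ih (fun j hj => h j (Finset.mem_insert_of_mem hj))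
    simp only [Finset.prod_insert hi, Finset.sum_insert hi]
    refine (h1.fun_mul h2).congr_deriv ?_
    ring

theorem Q_deriv_o {n : ℕ} {a c : Fin n → ℝ} (h : Ordered a c) (o : Fin n) :
    (Q a c o).derivative.eval (a o) = ∑ σ : Fin n → Bool, wt a c σ *
      ∑ j ∈ Finset.univ.erase o, (a o - xs a c o σ j)⁻¹ := by
  have h1 := (Q a c o).hasDerivAt (a o)
  refine h1.unique ?_
  have : (fun y => (Q a c o).eval y) = fun y => ∑ σ : Fin n → Bool, wt a c σ *
    ∏ j ∈ Finset.univ.erase o, ((a o - xs a c o σ j)⁻¹ * (y - xs a c o σ j)) :=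
    funext (Q_eval a c o)
  rw [this]
  refine HasDerivAt.fun_sum fun σ _ => ?_
  refine HasDerivAt.const_mul _ ?_
  have := hasDerivAt_prod_log (Finset.univ.erase o)
    (fun j y => (a o - xs a c o σ j)⁻¹ * (y - xs a c o σ j))
    (fun j => (a o - xs a c o σ j)⁻¹) (a o) (by
      intro j hj
      have hne := xs_ne h (Finset.ne_of_mem_erase hj) σ
      rw [inv_mul_cancel₀ hne, one_mul]
      simpa using ((hasDerivAt_id (a o)).sub_const (xs a c o σ j)).const_mul
        ((a o - xs a c o σ j)⁻¹))
  rw [Finset.prod_eq_one, one_mul] at this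
  · exact this
  · intro j hj
    exact inv_mul_cancel₀ (xs_ne h (Finset.ne_of_mem_erase hj) σ)

theorem real_unique {n : ℕ} {a c : Fin n → ℝ} (h : Ordered a c) (o : Fin n) (T : Polynomial ℝ)
    (hT : T.natDegree ≤ n - 1) (h0 : T.eval (a o) = 0) (u v : Fin n → ℝ)
    (hu : ∀ i, 0 < u i) (hv : ∀ i, 0 < v i)
    (hm : ∀ i, i ≠ o → T.eval (a i) * v i = - (T.eval (c i) * u i)) : T = 0 := by
  have hroot : ∀ i, ∃ r, a i ≤ r ∧ r ≤ c i ∧ T.eval r = 0 := by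
    intro i
    by_cases hi : i = o
    · subst hi; exact ⟨a i, le_rfl, (h.lt i).le, h0⟩
    · have := hm i hi
      have hu := hu i
      have hv := hv i
      have hc : ContinuousOn (fun x => T.eval x) (Set.Icc (a i) (c i)) := T.continuous.continuousOn
      rcases le_total (T.eval (a i)) 0 with h1 | h1
      · have h2 : 0 ≤ T.eval (c i) := by
          by_contra hcon; push Not at hcon
          nlinarith [mul_nonpos_of_nonpos_of_nonneg h1 hv.le, mul_neg_of_neg_of_pos hcon hu]
        obtain ⟨r, hr, hr0⟩ := intermediate_value_Icc (h.lt i).le hc ⟨h1, h2⟩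
        exact ⟨r, hr.1, hr.2, hr0⟩
      · have h2 : T.eval (c i) ≤ 0 := by
          by_contra hcon; push Not at hcon
          nlinarith [mul_nonneg h1 hv.le, mul_pos hcon hu]
        obtain ⟨r, hr, hr0⟩ := intermediate_value_Icc' (h.lt i).le hc ⟨h2, h1⟩
        exact ⟨r, hr.1, hr.2, hr0⟩
  choose r hr1 hr2 hr3 using hroot
  have hinj : Function.Injective r := by
    intro i j hij
    by_contra hne
    rcases lt_or_gt_of_ne hne with h3 | h3
    · have := h.sep _ _ h3; linarith [hr2 i, hr1 j]
    · have := h.sep _ _ h3; linarith [hr2 j, hr1 i]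
  refine Polynomial.eq_zero_of_natDegree_lt_card_of_eval_eq_zero T hinj hr3 ?_
  have := o.isLt
  simp only [Fintype.card_fin]
  omega

/-- real part of a complex polynomial -/
noncomputable def rePoly (T : Polynomial ℂ) : Polynomial ℝ :=
  ∑ i ∈ Finset.range (T.natDegree + 1), Polynomial.C (T.coeff i).re * Polynomial.X ^ i

theorem rePoly_eval (T : Polynomial ℂ) (x : ℝ) : (rePoly T).eval x = (T.eval (x : ℂ)).re := by
  rw [Polynomial.eval_eq_sum_range (p := T), Complex.re_sum]
  simp only [rePoly, Polynomial.eval_finsetSum, Polynomial.eval_mul, Polynomial.eval_C,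
    Polynomial.eval_pow, Polynomial.eval_X]
  refine Finset.sum_congr rfl fun i _ => ?_
  rw [← Complex.ofReal_pow, Complex.re_mul_ofReal]

theorem rePoly_coeff (T : Polynomial ℂ) (i : ℕ) : (rePoly T).coeff i = (T.coeff i).re := by
  simp only [rePoly, Polynomial.finsetSum_coeff, Polynomial.coeff_C_mul, Polynomial.coeff_X_pow]
  simp only [mul_ite, mul_one, mul_zero, Finset.sum_ite_eq, Finset.mem_range]
  split_ifs with h
  · rfl
  · rw [Polynomial.coeff_eq_zero_of_natDegree_lt (by omega)]; simp

theorem rePoly_natDegree (T : Polynomial ℂ) : (rePoly T).natDegree ≤ T.natDegree := by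
  refine Polynomial.natDegree_le_iff_coeff_eq_zero.mpr fun i hi => ?_
  rw [rePoly_coeff, Polynomial.coeff_eq_zero_of_natDegree_lt hi]; simp

theorem complex_unique {n : ℕ} {a c : Fin n → ℝ} (h : Ordered a c) (o : Fin n) (T : Polynomial ℂ)
    (hT : T.natDegree ≤ n - 1) (h0 : T.eval (a o : ℂ) = 0) (u v : Fin n → ℝ)
    (hu : ∀ i, 0 < u i) (hv : ∀ i, 0 < v i)
    (hm : ∀ i, i ≠ o → T.eval (a i : ℂ) * v i = - (T.eval (c i : ℂ) * u i)) : T = 0 := by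
  have key : ∀ w : ℂ, rePoly (Polynomial.C w * T) = 0 := by
    intro w
    refine real_unique h o _ ?_ ?_ u v hu hv ?_
    · exact ((rePoly_natDegree _).trans (Polynomial.natDegree_C_mul_le _ _)).trans hT
    · rw [rePoly_eval]; simp [h0]
    · intro i hi
      rw [rePoly_eval, rePoly_eval, ← Complex.re_mul_ofReal, ← Complex.re_mul_ofReal,
        ← Complex.neg_re]
      congr 1
      simp only [Polynomial.eval_mul, Polynomial.eval_C]
      linear_combination w * hm i hi
  ext i
  have h1 := congrArg (fun p => Polynomial.coeff p i) (key 1)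
  have h2 := congrArg (fun p => Polynomial.coeff p i) (key Complex.I)
  simp [rePoly_coeff] at h1 h2
  simp [Complex.ext_iff, h1, h2]

theorem prod_sqrt_pos {n : ℕ} {a c : Fin n → ℝ} (h : Ordered a c) (i : Fin n) :
    0 < ∏ j ∈ Finset.univ.erase i, √((a i - a j) * (a i - c j)) ∧
    0 < ∏ j ∈ Finset.univ.erase i, √((c i - a j) * (c i - c j)) := by
  constructor <;>
  · refine Finset.prod_pos fun j hj => Real.sqrt_pos.mpr ?_
    rcases h.signs (Finset.ne_of_mem_erase hj).symm with ⟨h1, h2, h3, h4⟩ | ⟨h1, h2, h3, h4⟩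
    · positivity
    · first | exact mul_pos_of_neg_of_neg h1 h2 | exact mul_pos_of_neg_of_neg h3 h4

theorem P_eq {n : ℕ} {a c : Fin n → ℝ} (h : Ordered a c) (o : Fin n) (P : Polynomial ℂ)
    (hP : P.natDegree ≤ n - 1)
    (hm : ∀ i, i ≠ o →
      P.eval (a i : ℂ) * (∏ j ∈ Finset.univ.erase i, √((c i - a j) * (c i - c j)) : ℝ) =
      - (P.eval (c i : ℂ) * (∏ j ∈ Finset.univ.erase i, √((a i - a j) * (a i - c j)) : ℝ))) :
    ∃ k : ℂ, P = Polynomial.C k * (Q a c o).map Complex.ofRealHom := by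
  have hQ : 0 < (Q a c o).eval (a o) := by
    rw [Q_eval_o h]
    exact Finset.sum_pos (fun σ _ => wt_pos h σ) Finset.univ_nonempty
  have hev : ∀ x : ℝ, ((Q a c o).map Complex.ofRealHom).eval (x : ℂ) = ((Q a c o).eval x : ℝ) := by
    intro x
    rw [Polynomial.eval_map]
    exact Polynomial.eval₂_at_apply Complex.ofRealHom x
  refine ⟨P.eval (a o : ℂ) / ((Q a c o).eval (a o) : ℝ), ?_⟩
  rw [← sub_eq_zero]
  have hQ' : (((Q a c o).eval (a o) : ℝ) : ℂ) ≠ 0 := by exact_mod_cast hQ.ne'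
  refine complex_unique h o _ ?_ ?_ (fun i => ∏ j ∈ Finset.univ.erase i, √((a i - a j) * (a i - c j)))
    (fun i => ∏ j ∈ Finset.univ.erase i, √((c i - a j) * (c i - c j)))
    (fun i => (prod_sqrt_pos h i).1) (fun i => (prod_sqrt_pos h i).2) ?_
  · refine (Polynomial.natDegree_sub_le _ _).trans (max_le hP ?_)
    refine (Polynomial.natDegree_C_mul_le _ _).trans ?_
    exact Polynomial.natDegree_map_le.trans (Q_natDegree a c o)
  · rw [Polynomial.eval_sub, Polynomial.eval_mul, Polynomial.eval_C, hev]
    field_simp; ring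
  · intro i hi
    have h1 := hm i hi
    have h2 := congrArg (fun x : ℝ => (x : ℂ)) (Q_match h hi)
    simp only [Complex.ofReal_mul, Complex.ofReal_neg] at h2
    simp only [Polynomial.eval_sub, Polynomial.eval_mul, Polynomial.eval_C, hev]
    linear_combination h1 - P.eval (a o : ℂ) / ((Q a c o).eval (a o) : ℝ) * h2

/-! Limits -/

theorem half_cpow_neg {w : ℂ} (hw : 0 < w.im) :
    w ^ ((1 : ℂ) / 2) = Complex.I * (-w) ^ ((1 : ℂ) / 2) := by
  have hw0 : w ≠ 0 := by rintro rfl; simp at hw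
  have hlog : Complex.log w = Complex.log (-w) + Real.pi * Complex.I := by
    unfold Complex.log
    rw [Complex.arg_neg_eq_arg_sub_pi_of_im_pos hw, norm_neg]
    push_cast; ring
  rw [Complex.cpow_def_of_ne_zero hw0, Complex.cpow_def_of_ne_zero (neg_ne_zero.mpr hw0), hlog,
    add_mul, Complex.exp_add, mul_comm]
  congr 1
  rw [show (Real.pi : ℂ) * Complex.I * (1 / 2) = Real.pi / 2 * Complex.I by ring,
    Complex.exp_pi_div_two_mul_I]

theorem half_ofReal {x : ℝ} (hx : 0 < x) : ((x : ℂ)) ^ ((1 : ℂ) / 2) = (√x : ℝ) := by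
  rw [Real.sqrt_eq_rpow, Complex.ofReal_cpow hx.le]; norm_num

theorem tendsto_half_pos {x y : ℝ} (h : y < x) :
    Filter.Tendsto (fun z : ℂ => (z - (y : ℂ)) ^ ((1 : ℂ) / 2)) (nhdsWithin (x : ℂ) UHP)
      (nhds ((√(x - y) : ℝ) : ℂ)) := by
  have : ContinuousAt (fun z : ℂ => (z - (y : ℂ)) ^ ((1 : ℂ) / 2)) (x : ℂ) := by
    refine ContinuousAt.cpow (by fun_prop) (by fun_prop) ?_
    rw [← Complex.ofReal_sub]
    exact Complex.ofReal_mem_slitPlane.mpr (by linarith)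
  have h2 := this.tendsto
  rw [← Complex.ofReal_sub, half_ofReal (by linarith : 0 < x - y)] at h2
  exact h2.mono_left nhdsWithin_le_nhds

theorem tendsto_half_neg {x y : ℝ} (h : x < y) :
    Filter.Tendsto (fun z : ℂ => (z - (y : ℂ)) ^ ((1 : ℂ) / 2)) (nhdsWithin (x : ℂ) UHP)
      (nhds (Complex.I * ((√(y - x) : ℝ) : ℂ))) := by
  have : ContinuousAt (fun z : ℂ => Complex.I * (-(z - (y : ℂ))) ^ ((1 : ℂ) / 2)) (x : ℂ) := by
    refine ContinuousAt.mul (by fun_prop) (ContinuousAt.cpow (by fun_prop) (by fun_prop) ?_)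
    rw [← Complex.ofReal_sub, ← Complex.ofReal_neg]
    exact Complex.ofReal_mem_slitPlane.mpr (by linarith)
  have h2 := this.tendsto
  rw [← Complex.ofReal_sub, ← Complex.ofReal_neg, half_ofReal (by linarith : 0 < -(x - y)),
    neg_sub] at h2
  refine (h2.mono_left nhdsWithin_le_nhds).congr' ?_
  filter_upwards [self_mem_nhdsWithin] with z hz
  rw [half_cpow_neg (w := z - (y : ℂ))]
  have : 0 < z.im := hz
  simpa using this

theorem tendsto_pair_pos {x y y' : ℝ} (h : y < x) (h' : y' < x) :
    Filter.Tendsto (fun z : ℂ => (z - (y : ℂ)) ^ ((1 : ℂ) / 2) * (z - (y' : ℂ)) ^ ((1 : ℂ) / 2))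
      (nhdsWithin (x : ℂ) UHP) (nhds ((√((x - y) * (x - y')) : ℝ) : ℂ)) := by
  rw [Real.sqrt_mul (by linarith), Complex.ofReal_mul]
  exact (tendsto_half_pos h).mul (tendsto_half_pos h')

theorem tendsto_pair_neg {x y y' : ℝ} (h : x < y) (h' : x < y') :
    Filter.Tendsto (fun z : ℂ => (z - (y : ℂ)) ^ ((1 : ℂ) / 2) * (z - (y' : ℂ)) ^ ((1 : ℂ) / 2))
      (nhdsWithin (x : ℂ) UHP) (nhds (-1 * ((√((x - y) * (x - y')) : ℝ) : ℂ))) := by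
  rw [show (x - y) * (x - y') = (y - x) * (y' - x) by ring,
    Real.sqrt_mul (by linarith), Complex.ofReal_mul]
  convert! (tendsto_half_neg h).mul (tendsto_half_neg h') using 2
  linear_combination (-(√(y - x) : ℝ) * (√(y' - x) : ℝ) : ℂ) * Complex.I_mul_I

/-- the equivalence between pairs and points -/
def idxEquiv (n : ℕ) : Fin n × Bool ≃ Fin (2 * n) where
  toFun p := idx n p.1 p.2
  invFun m := (⟨m.val / 2, by have := m.isLt; omega⟩, decide (m.val % 2 = 1))
  left_inv := by
    rintro ⟨k, s⟩
    cases s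
    · simp [idx]
    · simp [idx, Fin.ext_iff]; omega
  right_inv := by
    intro m
    by_cases h : m.val % 2 = 1
    · simp [idx, h, Fin.ext_iff]; omega
    · simp [idx, h, Fin.ext_iff]; omega

theorem prod_idx {n : ℕ} {M : Type*} [CommMonoid M] (f : Fin (2 * n) → M) :
    ∏ m, f m = ∏ k : Fin n, f (idx n k false) * f (idx n k true) := by
  rw [← Equiv.prod_comp (idxEquiv n), Fintype.prod_prod_type]
  refine Finset.prod_congr rfl fun k _ => ?_
  rw [Fintype.prod_bool, mul_comm]; rfl

theorem ordered_of_chamber {n : ℕ} {b : Fin (2 * n) → ℝ} (hb : b ∈ chamber n) :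
    Ordered (fun k => b (idx n k false)) (fun k => b (idx n k true)) := by
  have hb' : StrictMono b := hb
  constructor
  · intro k; apply hb'; simp [idx, Fin.lt_def]
  · intro i j hij; apply hb'
    simp only [Fin.lt_def] at hij
    simp [idx, Fin.lt_def]; omega

theorem tendsto_others {n : ℕ} {a c : Fin n → ℝ} (h : Ordered a c) (i : Fin n) :
    ∃ ε : ℂ, ε ≠ 0 ∧
    Filter.Tendsto (fun z : ℂ => ∏ j ∈ Finset.univ.erase i,
        ((z - (a j : ℂ)) ^ ((1 : ℂ) / 2) * (z - (c j : ℂ)) ^ ((1 : ℂ) / 2)))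
      (nhdsWithin (a i : ℂ) UHP)
      (nhds (ε * (∏ j ∈ Finset.univ.erase i, √((a i - a j) * (a i - c j)) : ℝ))) ∧
    Filter.Tendsto (fun z : ℂ => ∏ j ∈ Finset.univ.erase i,
        ((z - (a j : ℂ)) ^ ((1 : ℂ) / 2) * (z - (c j : ℂ)) ^ ((1 : ℂ) / 2)))
      (nhdsWithin (c i : ℂ) UHP)
      (nhds (ε * (∏ j ∈ Finset.univ.erase i, √((c i - a j) * (c i - c j)) : ℝ))) := by
  refine ⟨∏ j ∈ Finset.univ.erase i, (if j < i then 1 else -1), ?_, ?_, ?_⟩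
  · refine Finset.prod_ne_zero_iff.mpr fun j _ => ?_
    split_ifs <;> norm_num
  all_goals
    rw [Complex.ofReal_prod, ← Finset.prod_mul_distrib]
    refine tendsto_finsetProd _ fun j hj => ?_
    have hne := Finset.ne_of_mem_erase hj
    have h1 := h.lt i
    have h2 := h.lt j
    split_ifs with hji
    · have := h.sep _ _ hji
      rw [one_mul]
      exact tendsto_pair_pos (by linarith) (by linarith)
    · have := h.sep i j (lt_of_le_of_ne (not_lt.mp hji) hne.symm)
      exact tendsto_pair_neg (by linarith) (by linarith)

theorem uhp_neBot (x : ℝ) : (nhdsWithin (x : ℂ) UHP).NeBot := by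
  rw [← mem_closure_iff_nhdsWithin_neBot]
  have : closure UHP = {z : ℂ | 0 ≤ z.im} := Complex.closure_setOfPred_lt_im 0
  rw [this]; simp

theorem half_ne_zero {z : ℂ} (hz : z ∈ UHP) (y : ℝ) : (z - (y : ℂ)) ^ ((1 : ℂ) / 2) ≠ 0 := by
  have : z - (y : ℂ) ≠ 0 := by
    intro h
    have h1 : 0 < z.im := hz
    have h2 := congrArg Complex.im h
    simp at h2; linarith
  simp [Complex.cpow_eq_zero_iff, this]

theorem match_of_limits {n : ℕ} {b : Fin (2 * n) → ℝ} (hb : b ∈ chamber n) (P : Polynomial ℂ)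
    (i : Fin n) (L : ℂ)
    (h1 : Filter.Tendsto
        (fun z : ℂ => fP n b P z * (z - (b (idx n i false) : ℂ)) ^ ((1:ℂ)/2)
          * (z - (b (idx n i true) : ℂ)) ^ ((1:ℂ)/2))
        (nhdsWithin (b (idx n i false) : ℂ) UHP) (nhds L))
    (h2 : Filter.Tendsto
        (fun z : ℂ => fP n b P z * (z - (b (idx n i false) : ℂ)) ^ ((1:ℂ)/2)
          * (z - (b (idx n i true) : ℂ)) ^ ((1:ℂ)/2))
        (nhdsWithin (b (idx n i true) : ℂ) UHP) (nhds (-L))) :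
    P.eval (b (idx n i false) : ℂ) * (∏ j ∈ Finset.univ.erase i,
      √((b (idx n i true) - b (idx n j false)) * (b (idx n i true) - b (idx n j true))) : ℝ) =
    - (P.eval (b (idx n i true) : ℂ) * (∏ j ∈ Finset.univ.erase i,
      √((b (idx n i false) - b (idx n j false)) * (b (idx n i false) - b (idx n j true))) : ℝ)) := by
  have h := ordered_of_chamber hb
  obtain ⟨ε, hε, t1, t2⟩ := tendsto_others h i
  have hpos := prod_sqrt_pos h i
  have heq : ∀ z ∈ UHP, (fP n b P z * (z - (b (idx n i false) : ℂ)) ^ ((1:ℂ)/2)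
          * (z - (b (idx n i true) : ℂ)) ^ ((1:ℂ)/2)) * (∏ j ∈ Finset.univ.erase i,
        ((z - (b (idx n j false) : ℂ)) ^ ((1 : ℂ) / 2) *
          (z - (b (idx n j true) : ℂ)) ^ ((1 : ℂ) / 2))) = P.eval z := by
    intro z hz
    unfold fP Dfun
    rw [prod_idx, ← Finset.mul_prod_erase _ _ (Finset.mem_univ i)]
    have e1 := half_ne_zero hz (b (idx n i false))
    have e2 := half_ne_zero hz (b (idx n i true))
    have e3 : ∏ j ∈ Finset.univ.erase i,
        ((z - (b (idx n j false) : ℂ)) ^ ((1 : ℂ) / 2) *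
          (z - (b (idx n j true) : ℂ)) ^ ((1 : ℂ) / 2)) ≠ 0 :=
      Finset.prod_ne_zero_iff.mpr fun j _ => mul_ne_zero (half_ne_zero hz _) (half_ne_zero hz _)
    generalize (∏ j ∈ Finset.univ.erase i,
        ((z - (b (idx n j false) : ℂ)) ^ ((1 : ℂ) / 2) *
          (z - (b (idx n j true) : ℂ)) ^ ((1 : ℂ) / 2))) = A at *
    generalize (z - (b (idx n i false) : ℂ)) ^ ((1:ℂ)/2) = B at *
    generalize (z - (b (idx n i true) : ℂ)) ^ ((1:ℂ)/2) = B' at *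
    field_simp
  have lim : ∀ x : ℝ, Filter.Tendsto (fun z : ℂ => P.eval z) (nhdsWithin (x : ℂ) UHP)
      (nhds (P.eval (x : ℂ))) := fun x => P.continuous.continuousAt.tendsto.mono_left
        nhdsWithin_le_nhds
  have k1 := (h1.mul t1).congr' (by filter_upwards [self_mem_nhdsWithin] with z hz using heq z hz)
  have k2 := (h2.mul t2).congr' (by filter_upwards [self_mem_nhdsWithin] with z hz using heq z hz)
  have := uhp_neBot (b (idx n i false))
  have := uhp_neBot (b (idx n i true))
  have r1 := tendsto_nhds_unique k1 (lim _)
  have r2 := tendsto_nhds_unique k2 (lim _)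
  rw [← r1, ← r2]
  ring

/-! Derivative of the partition function -/

theorem Zfun_eq {n : ℕ} (b : Fin (2 * n) → ℝ) :
    Zfun n b = (∏ k : Fin n, (b (idx n k true) - b (idx n k false)) ^ (-(1:ℝ)/8)) *
      (∑ σ : Fin n → Bool, wt (fun k => b (idx n k false)) (fun k => b (idx n k true)) σ)
        ^ ((1:ℝ)/2) := rfl

theorem wtsum_pos {n : ℕ} {a c : Fin n → ℝ} (h : Ordered a c) :
    0 < ∑ σ : Fin n → Bool, wt a c σ :=
  Finset.sum_pos (fun σ _ => wt_pos h σ) Finset.univ_nonempty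

theorem Zfun_pos {n : ℕ} {b : Fin (2 * n) → ℝ} (hb : b ∈ chamber n) : 0 < Zfun n b := by
  have h := ordered_of_chamber hb
  rw [Zfun_eq]
  refine mul_pos (Finset.prod_pos fun k _ => Real.rpow_pos_of_pos ?_ _)
    (Real.rpow_pos_of_pos (wtsum_pos h) _)
  have := h.lt k
  linarith

theorem differentiableAt_prod {ι E : Type*} [NormedAddCommGroup E] [NormedSpace ℝ E]
    {s : Finset ι} {f : ι → E → ℝ} {x : E} (h : ∀ i ∈ s, DifferentiableAt ℝ (f i) x) :
    DifferentiableAt ℝ (fun y => ∏ i ∈ s, f i y) x := by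
  classical
  exact (HasFDerivAt.finsetProd fun i hi => (h i hi).hasFDerivAt).differentiableAt

theorem logZ_differentiableAt {n : ℕ} {b : Fin (2 * n) → ℝ} (hb : b ∈ chamber n) :
    DifferentiableAt ℝ (fun x => Real.log (Zfun n x)) b := by
  have h := ordered_of_chamber hb
  refine DifferentiableAt.log ?_ (Zfun_pos hb).ne'
  change DifferentiableAt ℝ (fun b : Fin (2 * n) → ℝ =>
    (∏ k : Fin n, (b (idx n k true) - b (idx n k false)) ^ (-(1:ℝ)/8)) *
      (∑ σ : Fin n → Bool, wt (fun k => b (idx n k false)) (fun k => b (idx n k true)) σ)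
        ^ ((1:ℝ)/2)) b
  refine DifferentiableAt.mul ?_ ?_
  · refine differentiableAt_prod fun k _ => ?_
    refine DifferentiableAt.rpow_const (by fun_prop) (Or.inl ?_)
    have := h.lt k
    intro h'; linarith
  · refine DifferentiableAt.rpow_const ?_ (Or.inl (wtsum_pos h).ne')
    refine DifferentiableAt.fun_sum fun σ _ => ?_
    unfold wt
    refine differentiableAt_prod ?_
    rintro ⟨p, q⟩ hp
    simp only [Finset.mem_filter, Finset.mem_univ, true_and] at hp
    refine DifferentiableAt.rpow_const ?_ (Or.inl (h.ch_pos hp.ne).ne')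
    unfold ch
    simp only [div_eq_mul_inv]
    refine DifferentiableAt.fun_mul ?_ (DifferentiableAt.fun_inv ?_ ?_)
    · fun_prop
    · fun_prop
    rcases h.signs hp.ne with ⟨h1, h2, h3, h4⟩ | ⟨h1, h2, h3, h4⟩
    · exact mul_ne_zero h3.ne' h2.ne'
    · exact mul_ne_zero h3.ne h2.ne

/-- log-derivative of the cross ratio -/
noncomputable def EE {n : ℕ} (a c : Fin n → ℝ) (o i j : Fin n) : ℝ :=
  if i = o then (a o - a j)⁻¹ - (a o - c j)⁻¹ else 0

theorem hasDerivAt_ch {n : ℕ} {a c : Fin n → ℝ} (h : Ordered a c) (o : Fin n) {i j : Fin n}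
    (hij : i ≠ j) (hjo : j ≠ o) :
    HasDerivAt (fun t => ch (Function.update a o t) c i j) (ch a c i j * EE a c o i j) (a o) := by
  unfold ch EE
  by_cases hi : i = o
  · subst hi
    simp only [Function.update_self, Function.update_of_ne hjo, if_true]
    have hne : c i - a j ≠ 0 ∧ a i - c j ≠ 0 ∧ a i - a j ≠ 0 := by
      rcases h.signs hij with ⟨h1, h2, h3, h4⟩ | ⟨h1, h2, h3, h4⟩
      exacts [⟨h3.ne', h2.ne', h1.ne'⟩, ⟨h3.ne, h2.ne, h1.ne⟩]
    obtain ⟨n1, n2, n3⟩ := hne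
    have d1 : HasDerivAt (fun t => (c i - c j) * (t - a j)) (c i - c j) (a i) := by
      simpa using ((hasDerivAt_id (a i)).sub_const (a j)).const_mul (c i - c j)
    have d2 : HasDerivAt (fun t => (c i - a j) * (t - c j)) (c i - a j) (a i) := by
      simpa using ((hasDerivAt_id (a i)).sub_const (c j)).const_mul (c i - a j)
    refine (d1.fun_div d2 (mul_ne_zero n1 n2)).congr_deriv ?_
    field_simp
  · simp only [Function.update_of_ne hi, Function.update_of_ne hjo, if_neg hi, mul_zero]
    exact hasDerivAt_const _ _

theorem hasDerivAt_rpow_log {f : ℝ → ℝ} {x g : ℝ} (e : ℝ) (hf : 0 < f x)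
    (h : HasDerivAt f (f x * g) x) :
    HasDerivAt (fun t => f t ^ e) (f x ^ e * (e * g)) x := by
  refine (h.rpow_const (p := e) (Or.inl hf.ne')).congr_deriv ?_
  rw [Real.rpow_sub_one hf.ne']
  field_simp

theorem hasDerivAt_wt {n : ℕ} {a c : Fin n → ℝ} (h : Ordered a c) (o : Fin n)
    (ho : ∀ j, o ≤ j) (σ : Fin n → Bool) :
    HasDerivAt (fun t => wt (Function.update a o t) c σ)
      (wt a c σ * ∑ j ∈ Finset.univ.erase o,
        (sgn σ o * sgn σ j / 4) * ((a o - a j)⁻¹ - (a o - c j)⁻¹)) (a o) := by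
  have := hasDerivAt_prod_log (Finset.univ.filter (fun p : Fin n × Fin n => p.1 < p.2))
    (fun p t => ch (Function.update a o t) c p.1 p.2 ^ (sgn σ p.1 * sgn σ p.2 / 4))
    (fun p => (sgn σ p.1 * sgn σ p.2 / 4) * EE a c o p.1 p.2) (a o) (by
      rintro ⟨p, q⟩ hp
      simp only [Finset.mem_filter, Finset.mem_univ, true_and] at hp
      refine hasDerivAt_rpow_log (f := fun t => ch (Function.update a o t) c p q) _ ?_ ?_
      · simpa using h.ch_pos hp.ne
      · simpa using hasDerivAt_ch h o hp.ne (lt_of_le_of_lt (ho p) hp).ne')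
  simp only [Function.update_eq_self] at this
  refine this.congr_deriv ?_
  unfold wt
  congr 1
  rw [Finset.sum_filter, Fintype.sum_prod_type, Fintype.sum_eq_single o]
  · rw [← Finset.sum_filter]
    refine Finset.sum_congr ?_ ?_
    · ext j
      simp only [Finset.mem_filter, Finset.mem_univ, true_and, Finset.mem_erase, and_true]
      exact ⟨fun hj => hj.ne', fun hj => lt_of_le_of_ne (ho j) hj.symm⟩
    · intro j _
      simp [EE]
  · intro i hi
    refine Finset.sum_eq_zero fun j _ => ?_
    simp [EE, hi]

/-- derivative of the sum of the weights -/
noncomputable def S' {n : ℕ} (a c : Fin n → ℝ) (o : Fin n) : ℝ :=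
  ∑ σ : Fin n → Bool, (wt a c σ * ∑ j ∈ Finset.univ.erase o,
        (sgn σ o * sgn σ j / 4) * ((a o - a j)⁻¹ - (a o - c j)⁻¹))

theorem pderiv_logZ {n : ℕ} {b : Fin (2 * n) → ℝ} (hb : b ∈ chamber n) (o : Fin n)
    (ho : ∀ j, o ≤ j) :
    pderiv' (idx n o false) (fun x => Real.log (Zfun n x)) b =
      1 / 8 * (b (idx n o true) - b (idx n o false))⁻¹ + 1 / 2 *
      (S' (fun k => b (idx n k false)) (fun k => b (idx n k true)) o /
        ∑ σ : Fin n → Bool, wt (fun k => b (idx n k false)) (fun k => b (idx n k true)) σ) := by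
  have h := ordered_of_chamber hb
  set a : Fin n → ℝ := fun k => b (idx n k false) with ha
  set c : Fin n → ℝ := fun k => b (idx n k true) with hc
  set z0 := idx n o false with hz0
  have inj1 : ∀ k, Function.update b z0 = Function.update b z0 → idx n k true ≠ z0 := by
    intro k _ h'
    have := congrArg Fin.val h'
    simp [hz0, idx] at this
    omega
  have inj2 : ∀ k, idx n k false = z0 → k = o := by
    intro k h'
    have := congrArg Fin.val h'
    simp [hz0, idx] at this
    exact Fin.ext (by omega)
  have e1 : ∀ t, (fun k => Function.update b z0 t (idx n k true)) = c := by
    intro t; funext k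
    rw [Function.update_of_ne (inj1 k rfl)]
  have e2 : ∀ t, (fun k => Function.update b z0 t (idx n k false)) = Function.update a o t := by
    intro t; funext k
    by_cases hk : k = o
    · subst hk; simp [hz0]
    · rw [Function.update_of_ne hk, Function.update_of_ne (fun h' => hk (inj2 k h'))]
  have hZ : ∀ t, Zfun n (Function.update b z0 t) =
      (∏ k : Fin n, (c k - Function.update a o t k) ^ (-(1:ℝ)/8)) *
        (∑ σ : Fin n → Bool, wt (Function.update a o t) c σ) ^ ((1:ℝ)/2) := by
    intro t
    rw [Zfun_eq, e1, e2]
    congr 1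
    refine Finset.prod_congr rfl fun k _ => ?_
    rw [← congrFun (e1 t) k, ← congrFun (e2 t) k]
  have hd := (logZ_differentiableAt hb).hasFDerivAt
  have hb0 : Function.update b z0 (a o) = b := Function.update_eq_self _ _
  rw [← hb0] at hd
  have hd2 := hd.comp_hasDerivAt (a o) (hasDerivAt_update b z0 (a o))
  rw [hb0] at hd2
  refine hd2.unique ?_
  have hS := wtsum_pos h
  have f1 : HasDerivAt (fun t => ∏ k : Fin n, (c k - Function.update a o t k) ^ (-(1:ℝ)/8))
      ((∏ k : Fin n, (c k - a k) ^ (-(1:ℝ)/8)) * (1 / 8 * (c o - a o)⁻¹)) (a o) := by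
    have := hasDerivAt_prod_log Finset.univ
      (fun k t => (c k - Function.update a o t k) ^ (-(1:ℝ)/8))
      (fun k => (-(1:ℝ)/8) * (if k = o then -(c o - a o)⁻¹ else 0)) (a o) (by
        intro k _
        have hk : 0 < c k - a k := by have := h.lt k; linarith
        refine hasDerivAt_rpow_log (f := fun t => c k - Function.update a o t k) _ (by simpa using hk) ?_
        by_cases hko : k = o
        · subst hko
          simp only [Function.update_self, if_true]
          refine ((hasDerivAt_id (a k)).const_sub (c k)).congr_deriv ?_
          field_simp
        · simp only [Function.update_of_ne hko, if_neg hko, mul_zero]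
          exact hasDerivAt_const _ _)
    simp only [Function.update_eq_self] at this
    refine this.congr_deriv ?_
    congr 1
    rw [Fintype.sum_eq_single o]
    · simp only [if_true]; ring
    · intro k hk; simp [hk]
  have f2 : HasDerivAt (fun t => ∑ σ : Fin n → Bool, wt (Function.update a o t) c σ)
      (S' a c o) (a o) := HasDerivAt.fun_sum fun σ _ => hasDerivAt_wt h o ho σ
  have f3 : HasDerivAt (fun t => (∑ σ : Fin n → Bool, wt (Function.update a o t) c σ) ^ ((1:ℝ)/2))
      ((∑ σ : Fin n → Bool, wt a c σ) ^ ((1:ℝ)/2) *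
        (1 / 2 * (S' a c o / ∑ σ : Fin n → Bool, wt a c σ))) (a o) := by
    have := hasDerivAt_rpow_log (f := fun t => ∑ σ : Fin n → Bool, wt (Function.update a o t) c σ)
      (x := a o) (g := S' a c o / ∑ σ : Fin n → Bool, wt a c σ) (1 / 2)
      (by simpa using hS) (f2.congr_deriv (by
        simp only [Function.update_eq_self]; field_simp))
    simpa only [Function.update_eq_self] using this
  have f4 := f1.fun_mul f3
  have hfun : ((fun x => Real.log (Zfun n x)) ∘ Function.update b z0) = fun t => Real.log
      ((∏ k : Fin n, (c k - Function.update a o t k) ^ (-(1:ℝ)/8)) *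
        (∑ σ : Fin n → Bool, wt (Function.update a o t) c σ) ^ ((1:ℝ)/2)) := by
    funext t; simp only [Function.comp]; rw [hZ]
  rw [hfun]
  have p1 : (∏ k : Fin n, (c k - a k) ^ (-(1:ℝ)/8)) ≠ 0 :=
    (Finset.prod_pos fun k _ => Real.rpow_pos_of_pos (by have := h.lt k; linarith) _).ne'
  have p2 : (∑ σ : Fin n → Bool, wt a c σ) ^ ((1:ℝ)/2) ≠ 0 := (Real.rpow_pos_of_pos hS _).ne'
  refine (f4.log (by simpa only [Function.update_eq_self] using mul_ne_zero p1 p2)).congr_deriv ?_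
  simp only [Function.update_eq_self]
  generalize (∏ k : Fin n, (c k - a k) ^ (-(1:ℝ)/8)) = A at *
  generalize (∑ σ : Fin n → Bool, wt a c σ) ^ ((1:ℝ)/2) = B at *
  generalize S' a c o / ∑ σ : Fin n → Bool, wt a c σ = D at *
  change _ = 1 / 8 * (c o - a o)⁻¹ + 1 / 2 * D
  generalize (c o - a o)⁻¹ = X at *
  field_simp
  try ring

theorem Q_identity {n : ℕ} {a c : Fin n → ℝ} (h : Ordered a c) (o : Fin n) :
    2 * (Q a c o).derivative.eval (a o) =
      (∑ σ : Fin n → Bool, wt a c σ) *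
        (∑ j ∈ Finset.univ.erase o, ((a o - a j)⁻¹ + (a o - c j)⁻¹)) + 4 * S' a c o := by
  rw [Q_deriv_o h, S', Finset.sum_mul, Finset.mul_sum, Finset.mul_sum, ← Finset.sum_add_distrib]
  refine Finset.sum_congr rfl fun σ _ => ?_
  rw [mul_left_comm, mul_left_comm 4, ← mul_add]
  congr 1
  rw [Finset.mul_sum, Finset.mul_sum, ← Finset.sum_add_distrib]
  refine Finset.sum_congr rfl fun j _ => ?_
  unfold xs sgn
  cases σ o <;> cases σ j <;> simp <;> ring

theorem half_sq (w : ℂ) : (w ^ ((1 : ℂ) / 2)) ^ 2 = w := by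
  rw [one_div]; exact_mod_cast Complex.cpow_nat_inv_pow w (two_ne_zero)

theorem final_limit {n : ℕ} {b : Fin (2 * n) → ℝ} (hb : b ∈ chamber n) (o : Fin n)
    (ho : ∀ j, o ≤ j) (P : Polynomial ℂ) (k : ℂ)
    (hP : P = Polynomial.C k * (Q (fun k => b (idx n k false))
      (fun k => b (idx n k true)) o).map Complex.ofRealHom)
    (hlim : Filter.Tendsto
      (fun z : ℂ => (z - (b (idx n o false) : ℂ)) *
        ((Polynomial.eval z P)^2 / ∏ j : Fin (2*n), (z - (b j : ℂ))))
      (nhdsWithin (b (idx n o false) : ℂ) UHP) (nhds (-1))) :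
    Filter.Tendsto
      (fun z : ℂ =>
        ((z - (b (idx n o false) : ℂ)) *
            ((Polynomial.eval z P)^2 / ∏ j : Fin (2*n), (z - (b j : ℂ))) + 1)
          / (z - (b (idx n o false) : ℂ)))
      (nhdsWithin (b (idx n o false) : ℂ) UHP)
      (nhds (-8 * ((pderiv' (idx n o false) (fun x => Real.log (Zfun n x)) b : ℝ) : ℂ))) := by
  have h := ordered_of_chamber hb
  rw [pderiv_logZ hb o ho]
  set a : Fin n → ℝ := fun k => b (idx n k false) with ha
  set c : Fin n → ℝ := fun k => b (idx n k true) with hc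
  change Filter.Tendsto
      (fun z : ℂ => (z - (a o : ℂ)) *
        ((Polynomial.eval z P)^2 / ∏ j : Fin (2*n), (z - (b j : ℂ))))
      (nhdsWithin (a o : ℂ) UHP) (nhds (-1)) at hlim
  change Filter.Tendsto
      (fun z : ℂ => ((z - (a o : ℂ)) *
        ((Polynomial.eval z P)^2 / ∏ j : Fin (2*n), (z - (b j : ℂ))) + 1) / (z - (a o : ℂ)))
      (nhdsWithin (a o : ℂ) UHP) (nhds (-8 * ((1 / 8 * (c o - a o)⁻¹ + 1 / 2 *
      (S' a c o / ∑ σ : Fin n → Bool, wt a c σ) : ℝ) : ℂ)))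
  let H : ℂ → ℂ := fun z => (z - (c o : ℂ))⁻¹ *
    ∏ j ∈ Finset.univ.erase o, ((z - (a j : ℂ))⁻¹ * (z - (c j : ℂ))⁻¹)
  let G : ℂ → ℂ := fun z => (P.eval z) ^ 2 * H z
  have hzne : ∀ z ∈ UHP, ∀ y : ℝ, z - (y : ℂ) ≠ 0 := by
    intro z hz y h'
    have h1 : 0 < z.im := hz
    have h2 := congrArg Complex.im h'
    simp at h2; linarith
  have hG : ∀ z ∈ UHP, (z - (a o : ℂ)) *
        ((Polynomial.eval z P)^2 / ∏ j : Fin (2*n), (z - (b j : ℂ))) = G z := by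
    intro z hz
    simp only [G, H]
    rw [prod_idx, ← Finset.mul_prod_erase _ _ (Finset.mem_univ o)]
    simp only [← mul_inv, Finset.prod_inv_distrib]
    have := hzne z hz (a o)
    change (z - (a o : ℂ)) * (_ / ((z - (a o : ℂ)) * (z - (c o : ℂ)) * ∏ j ∈ Finset.univ.erase o,
      ((z - (a j : ℂ)) * (z - (c j : ℂ))))) = _
    rw [mul_assoc (z - (a o : ℂ)), mul_div_assoc', mul_div_mul_left _ _ this, div_eq_mul_inv]
  -- derivative of H
  have hne1 : (a o : ℂ) - c o ≠ 0 := by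
    rw [← Complex.ofReal_sub]; exact_mod_cast (by have := h.lt o; intro h'; linarith)
  have hne2 : ∀ j ∈ Finset.univ.erase o, (a o : ℂ) - a j ≠ 0 ∧ (a o : ℂ) - c j ≠ 0 := by
    intro j hj
    rw [← Complex.ofReal_sub, ← Complex.ofReal_sub, Complex.ofReal_ne_zero, Complex.ofReal_ne_zero]
    rcases h.signs (Finset.ne_of_mem_erase hj).symm with ⟨h1, h2, h3, h4⟩ | ⟨h1, h2, h3, h4⟩
    exacts [⟨h1.ne', h2.ne'⟩, ⟨h1.ne, h2.ne⟩]
  have dinv : ∀ y : ℂ, (a o : ℂ) - y ≠ 0 → HasDerivAt (fun z : ℂ => (z - y)⁻¹)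
      (((a o : ℂ) - y)⁻¹ * (-((a o : ℂ) - y)⁻¹)) (a o) := by
    intro y hy
    refine (((hasDerivAt_id (a o : ℂ)).sub_const y).fun_inv hy).congr_deriv ?_
    simp only [id]
    field_simp
  set sg1 : ℂ := ∑ j ∈ Finset.univ.erase o, (-((a o : ℂ) - a j)⁻¹ + -((a o : ℂ) - c j)⁻¹) with hsg1
  have dH : HasDerivAt H (H (a o) * (-((a o : ℂ) - c o)⁻¹ + sg1)) (a o) := by
    have d1 := dinv _ hne1
    have d2 := hasDerivAt_prod_log (Finset.univ.erase o)
      (fun j (z : ℂ) => ((z - (a j : ℂ))⁻¹ * (z - (c j : ℂ))⁻¹))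
      (fun j => (-((a o : ℂ) - a j)⁻¹ + -((a o : ℂ) - c j)⁻¹)) (a o) (by
        intro j hj
        refine ((dinv _ (hne2 j hj).1).fun_mul (dinv _ (hne2 j hj).2)).congr_deriv ?_
        ring)
    refine (d1.fun_mul d2).congr_deriv ?_
    simp only [H, hsg1]
    ring
  have dG : HasDerivAt G (2 * P.eval (a o : ℂ) * P.derivative.eval (a o : ℂ) * H (a o) +
      (P.eval (a o : ℂ)) ^ 2 * (H (a o) * (-((a o : ℂ) - c o)⁻¹ + sg1))) (a o) := by
    refine (((P.hasDerivAt (a o : ℂ)).fun_pow 2).fun_mul dH).congr_deriv ?_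
    simp
  have hGlim : Filter.Tendsto G (nhdsWithin (a o : ℂ) UHP) (nhds (-1)) := hlim.congr' (by
    filter_upwards [self_mem_nhdsWithin] with z hz using hG z hz)
  have := uhp_neBot (a o)
  have hG0 : G (a o) = -1 :=
    tendsto_nhds_unique (dG.continuousAt.tendsto.mono_left nhdsWithin_le_nhds) hGlim
  have hG0' : P.eval (a o : ℂ) ^ 2 * H (a o) = -1 := hG0
  have hslope := (hasDerivAt_iff_tendsto_slope.mp dG).mono_left (nhdsWithin_mono (a o : ℂ)
    (show UHP ⊆ {(a o : ℂ)}ᶜ from fun z hz => by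
      intro h'
      exact hzne z hz (a o) (sub_eq_zero.mpr h')))
  have hfin : 2 * P.eval (a o : ℂ) * P.derivative.eval (a o : ℂ) * H (a o) +
      (P.eval (a o : ℂ)) ^ 2 * (H (a o) * (-((a o : ℂ) - c o)⁻¹ + sg1)) =
      -8 * ((1 / 8 * (c o - a o)⁻¹ + 1 / 2 *
      (S' a c o / ∑ σ : Fin n → Bool, wt a c σ) : ℝ) : ℂ) := by
    have hS := (wtsum_pos h).ne'
    have hQo := Q_eval_o h o
    have hQd := Q_identity h o
    have hev : ∀ (p : Polynomial ℝ) (x : ℝ), (p.map Complex.ofRealHom).eval (x : ℂ) =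
        (p.eval x : ℝ) := by
      intro p x
      rw [Polynomial.eval_map]
      exact Polynomial.eval₂_at_apply Complex.ofRealHom x
    have hP1 : P.eval (a o : ℂ) = k * ((∑ σ : Fin n → Bool, wt a c σ : ℝ) : ℂ) := by
      rw [hP, Polynomial.eval_mul, Polynomial.eval_C, hev, hQo]
    have hP2 : P.derivative.eval (a o : ℂ) = k * (((Q a c o).derivative.eval (a o) : ℝ) : ℂ) := by
      rw [hP, Polynomial.derivative_C_mul, Polynomial.derivative_map, Polynomial.eval_mul,
        Polynomial.eval_C, hev]
    have hsg2 : sg1 = -((∑ j ∈ Finset.univ.erase o, ((a o - a j)⁻¹ + (a o - c j)⁻¹) : ℝ) : ℂ) := by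
      rw [hsg1]; push_cast; rw [← Finset.sum_neg_distrib]
      exact Finset.sum_congr rfl fun j _ => by ring
    have hQd' := congrArg (fun x : ℝ => (x : ℂ)) hQd
    rw [hsg2]
    generalize (∑ j ∈ Finset.univ.erase o, ((a o - a j)⁻¹ + (a o - c j)⁻¹)) = Y at *
    generalize (∑ σ : Fin n → Bool, wt a c σ) = S at *
    rw [hP1] at hG0' ⊢
    rw [hP2]
    push_cast at hQd' ⊢
    generalize (((Q a c o).derivative.eval (a o) : ℝ) : ℂ) = q at *
    have hS' : (S : ℂ) ≠ 0 := by exact_mod_cast hS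
    have hflip : ((c o : ℂ) - a o)⁻¹ = -((a o : ℂ) - c o)⁻¹ := by rw [← inv_neg, neg_sub]
    rw [hflip]
    generalize ((a o : ℂ) - c o)⁻¹ = X at *
    generalize H (a o) = Hv at hG0' ⊢
    have : 2 * (k * (S : ℂ)) * (k * q) * Hv = (k * S) ^ 2 * Hv * (2 * q / S) := by
      field_simp
    rw [this, ← mul_assoc, hG0', hQd']
    field_simp
    ring
  rw [hfin] at hslope
  refine hslope.congr' ?_
  filter_upwards [self_mem_nhdsWithin] with z hz
  rw [slope_def_field, hG0, hG z hz, sub_neg_eq_add]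

end SleObs

/-- the rational function `R = P²/∏ⱼ(z − bⱼ)` (equal to `f_P²` on `ℍ`)
has a simple pole at `b₁` with expansion
`(z − b₁) R(z) = −1 − 8 ∂_{b₁}(log Z)(b) (z − b₁) + o(z − b₁)` as `z → b₁` in `ℍ`. -/
theorem squared_observable_expansion_at_tip (n : ℕ) (hn : 1 ≤ n)
    (b : Fin (2*n) → ℝ) (hb : b ∈ chamber n)
    (P : Polynomial ℂ) (hP : Admissible n hn b P) :
    Filter.Tendsto
      (fun z : ℂ => (z - (b ⟨0, by omega⟩ : ℂ)) *
        ((Polynomial.eval z P)^2 / ∏ j : Fin (2*n), (z - (b j : ℂ))))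
      (nhdsWithin (b ⟨0, by omega⟩ : ℂ) UHP) (nhds (-1)) ∧
    Filter.Tendsto
      (fun z : ℂ =>
        ((z - (b ⟨0, by omega⟩ : ℂ)) *
            ((Polynomial.eval z P)^2 / ∏ j : Fin (2*n), (z - (b j : ℂ))) + 1)
          / (z - (b ⟨0, by omega⟩ : ℂ)))
      (nhdsWithin (b ⟨0, by omega⟩ : ℂ) UHP)
      (nhds (-8 * ((pderiv' ⟨0, by omega⟩ (fun x => Real.log (Zfun n x)) b : ℝ) : ℂ))) := by
  have hpo : ∃ o : Fin n, (∀ j, o ≤ j) ∧ idx n o false = ⟨0, by omega⟩ ∧ o.val = 0 :=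
    ⟨⟨0, hn⟩, fun j => Fin.mk_le_of_le_val (Nat.zero_le _), by simp [idx], rfl⟩
  obtain ⟨o, ho, hidx, ho0⟩ := hpo
  obtain ⟨hdeg, hmatch, hnorm⟩ := hP
  have hfirst : Filter.Tendsto
      (fun z : ℂ => (z - (b ⟨0, by omega⟩ : ℂ)) *
        ((Polynomial.eval z P)^2 / ∏ j : Fin (2*n), (z - (b j : ℂ))))
      (nhdsWithin (b ⟨0, by omega⟩ : ℂ) UHP) (nhds (-1)) := by
    have h2 := hnorm.pow 2
    rw [Complex.I_sq] at h2
    refine h2.congr fun z => ?_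
    rw [mul_pow, SleObs.half_sq]
    unfold fP Dfun
    rw [div_pow, ← Finset.prod_pow]
    simp only [SleObs.half_sq]
  obtain ⟨k, hk⟩ := SleObs.P_eq (SleObs.ordered_of_chamber hb) o P hdeg (by
    intro i hi
    obtain ⟨L, h1, h2⟩ := hmatch i (by
      rcases Nat.eq_zero_or_pos i.val with h | h
      · exact absurd (Fin.ext (h.trans ho0.symm)) hi
      · exact h)
    exact SleObs.match_of_limits hb P i L h1 h2)
  refine ⟨hfirst, ?_⟩
  rw [← hidx] at hfirst ⊢
  exact SleObs.final_limit hb o ho P k hk hfirst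
end

section
/- The partition function Z is covariant of conformal weight 1/16 under Möbius transformations of the upper half-plane preserving the order of the marked points: let n ≥ 1, let a, b, c, d ∈ ℝ with ad − bc > 0, set w(z) = (az + b)/(cz + d), and let β ∈ X_n be such that c·β_j + d > 0 for all j = 1, …, 2n. Then (w(β_1), …, w(β_{2n})) ∈ X_n and Z(w(β_1), …, w(β_{2n})) = ∏_{j=1}^{2n} w'(β_j)^{−1/16} · Z(β_1, …, β_{2n}), where w'(x) = (ad − bc)/(cx + d)² > 0. In particular, Z(λβ_1 + c₀, …, λβ_{2n} + c₀) = λ^{−n/8}·Z(β) for all λ > 0 and c₀ ∈ ℝ. -/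
open scoped BigOperators
open Finset

theorem prod_idx (n : ℕ) (f : Fin (2*n) → ℝ) :
    ∏ j : Fin (2*n), f j = ∏ k : Fin n, (f (idx n k true) * f (idx n k false)) := by
  have hb : Function.Bijective (fun x : Fin n × Bool => idx n x.1 x.2) := by
    constructor
    · rintro ⟨a, s⟩ ⟨b, t⟩ hab
      cases s <;> cases t <;> simp [idx, Fin.ext_iff] at hab ⊢ <;> omega
    · intro j
      have hj := j.isLt
      rcases Nat.even_or_odd' j.val with ⟨k, hk | hk⟩
      · exact ⟨(⟨k, by omega⟩, false), by simp [idx, Fin.ext_iff]; omega⟩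
      · exact ⟨(⟨k, by omega⟩, true), by simp [idx, Fin.ext_iff]; omega⟩
  rw [← Fintype.prod_bijective _ hb (fun x => f (idx n x.1 x.2)) f (fun _ => rfl),
    Fintype.prod_prod_type]
  simp

theorem rpow_pair (D a b t : ℝ) (hD : 0 < D) (ha : 0 < a) (hb : 0 < b) (ht : 0 < t) :
    (D / (a * b) * t) ^ (-(1:ℝ)/8) =
      (D / a ^ 2) ^ (-(1:ℝ)/16) * (D / b ^ 2) ^ (-(1:ℝ)/16) * t ^ (-(1:ℝ)/8) := by
  rw [Real.mul_rpow (by positivity) ht.le,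
    ← Real.mul_rpow (x := D / a ^ 2) (y := D / b ^ 2) (by positivity) (by positivity)]
  have : D / a ^ 2 * (D / b ^ 2) = (D / (a * b)) ^ (2 : ℝ) := by
    rw [Real.rpow_two]; field_simp
  rw [this, ← Real.rpow_mul (by positivity)]
  norm_num

theorem moebius_sub (p q r s x y : ℝ) (hx : 0 < r * x + s) (hy : 0 < r * y + s) :
    (p * x + q) / (r * x + s) - (p * y + q) / (r * y + s) =
      (p * s - q * r) / ((r * x + s) * (r * y + s)) * (x - y) := by
  rw [div_sub_div _ _ hx.ne' hy.ne', div_mul_eq_mul_div]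
  congr 1
  ring

theorem chi_moebius (n : ℕ) (p q r s : ℝ) (h : 0 < p * s - q * r)
    (β : Fin (2*n) → ℝ) (hpos : ∀ j : Fin (2*n), 0 < r * β j + s) (i j : Fin n) :
    chi n (fun j => (p * β j + q) / (r * β j + s)) i j = chi n β i j := by
  unfold chi
  simp only [moebius_sub p q r s _ _ (hpos _) (hpos _)]
  have h1 := hpos (idx n i true)
  have h2 := hpos (idx n i false)
  have h3 := hpos (idx n j true)
  have h4 := hpos (idx n j false)
  generalize p * s - q * r = D at *
  generalize r * β (idx n i true) + s = A at *
  generalize r * β (idx n i false) + s = B at *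
  generalize r * β (idx n j true) + s = C at *
  generalize r * β (idx n j false) + s = E at *
  have hK : D ^ 2 / (A * B * C * E) ≠ 0 := by positivity
  rw [← mul_div_mul_left _ ((β (idx n i true) - β (idx n j false)) *
    (β (idx n i false) - β (idx n j true))) hK]
  congr 1 <;> (field_simp)

theorem Z_moebius (n : ℕ) (p q r s : ℝ) (h : 0 < p * s - q * r)
    (β : Fin (2*n) → ℝ) (hβ : β ∈ chamber n) (hpos : ∀ j : Fin (2*n), 0 < r * β j + s) :
    Zfun n (fun j => (p * β j + q) / (r * β j + s))
      = (∏ j : Fin (2*n), ((p * s - q * r) / (r * β j + s)^2) ^ (-(1:ℝ)/16)) * Zfun n β := by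
  unfold Zfun
  simp only [chi_moebius n p q r s h β hpos]
  rw [← mul_assoc, prod_idx, ← Finset.prod_mul_distrib]
  congr 1
  refine Finset.prod_congr rfl fun k _ => ?_
  rw [moebius_sub p q r s _ _ (hpos _) (hpos _)]
  refine rpow_pair _ _ _ _ h (hpos _) (hpos _) (sub_pos.2 (hβ ?_))
  simp [idx, Fin.lt_def]

/-- Möbius covariance of `Z` with conformal weight `1/16`.
For `w(z) = (pz + q)/(rz + s)` with `ps − qr > 0` and `r βⱼ + s > 0` for all `j`,
the image points lie in the chamber and
`Z(w(β₁), …, w(β₂ₙ)) = ∏ⱼ w'(βⱼ)^{−1/16} · Z(β)`, where `w'(x) = (ps − qr)/(rx + s)²`.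
In particular `Z(λβ + c₀) = λ^{−n/8} Z(β)` for `λ > 0`, `c₀ ∈ ℝ`. -/
theorem Z_moebius_covariance (n : ℕ) (hn : 1 ≤ n)
    (p q r s : ℝ) (h : 0 < p * s - q * r)
    (β : Fin (2*n) → ℝ) (hβ : β ∈ chamber n)
    (hpos : ∀ j : Fin (2*n), 0 < r * β j + s) :
    (fun j => (p * β j + q) / (r * β j + s)) ∈ chamber n ∧
    Zfun n (fun j => (p * β j + q) / (r * β j + s))
      = (∏ j : Fin (2*n), ((p * s - q * r) / (r * β j + s)^2) ^ (-(1:ℝ)/16)) * Zfun n β ∧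
    ∀ lam : ℝ, 0 < lam → ∀ c₀ : ℝ,
      Zfun n (fun j => lam * β j + c₀) = lam ^ (-(n:ℝ)/8) * Zfun n β := by
  refine ⟨?_, Z_moebius n p q r s h β hβ hpos, ?_⟩
  · intro i j hij
    have h1 : 0 < β j - β i := sub_pos.2 (hβ hij)
    have h2 := hpos i
    have h3 := hpos j
    refine sub_pos.1 ?_
    simp only
    rw [moebius_sub p q r s _ _ h3 h2]
    positivity
  · intro lam hlam c₀
    have key := Z_moebius n lam c₀ 0 1 (by simpa using hlam) β hβ (by simp)
    simp only [zero_mul, zero_add, div_one, mul_one, mul_zero, sub_zero, one_pow] at key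
    rw [key]
    congr 1
    rw [Finset.prod_const, Finset.card_univ, Fintype.card_fin, ← Real.rpow_natCast,
      ← Real.rpow_mul hlam.le]
    congr 1
    push_cast
    ring
end
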